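/- arXiv:1703.04675 — 2 statements merged into one kernel-verified Lean document; each statement's English description precedes it below -/
import Mathlib

section
/- Absolute continuity of the variation measure with respect to the 1-capacity: Let Ω ⊂ X be an open set and let u ∈ L^1_loc(Ω) with ‖Du‖(Ω) < ∞. Then for every ε > 0 there exists δ > 0 such that if A ⊂ Ω with capa_1(A) < δ, then ‖Du‖(A) < ε. -/
open MeasureTheory Filter Metric Set
open scoped Topology ENNReal NNReal symmDiff

noncomputable section

namespace PaperBV

/-- A rectifiable curve parametrized by arc-length: a `1`-Lipschitz map on `[0, len]`. -/
structure Curve (X : Type*) [MetricSpace X] where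
  len : ℝ
  len_nonneg : 0 ≤ len
  toFun : ℝ → X
  lip : LipschitzOnWith 1 toFun (Set.Icc 0 len)

variable {X : Type*} [MetricSpace X] [MeasurableSpace X] [BorelSpace X]

/-- The curve lies in the set `A`. -/
def Curve.In (γ : Curve X) (A : Set X) : Prop :=
  ∀ t ∈ Set.Icc (0 : ℝ) γ.len, γ.toFun t ∈ A

/-- The curve integral `∫_γ g ds` of a nonnegative function, for an
arc-length parametrized curve. -/
def Curve.integral (γ : Curve X) (g : X → ℝ≥0∞) : ℝ≥0∞ :=
  ∫⁻ t in Set.Icc (0 : ℝ) γ.len, g (γ.toFun t)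

/-- The upper gradient inequality `|u(x) - u(y)| ≤ ∫_γ g ds` along the curve `γ`,
where `x, y` are the endpoints of `γ`. -/
def UGIneq (u : X → ℝ) (g : X → ℝ≥0∞) (γ : Curve X) : Prop :=
  ENNReal.ofReal |u (γ.toFun 0) - u (γ.toFun γ.len)| ≤ γ.integral g

/-- `g` is an upper gradient of `u` on `X`: `g` is nonnegative (automatic in `ℝ≥0∞`),
Borel, and the upper gradient inequality holds along every curve. -/
def IsUpperGradient (u : X → ℝ) (g : X → ℝ≥0∞) : Prop :=
  Measurable g ∧ ∀ γ : Curve X, UGIneq u g γ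

/-- A family of curves has zero `1`-modulus: there is a nonnegative Borel function
`ρ ∈ L¹(X)` whose curve integral is infinite along every curve of the family. -/
def ZeroMod (μ : Measure X) (Γ : Set (Curve X)) : Prop :=
  ∃ ρ : X → ℝ≥0∞, Measurable ρ ∧ (∫⁻ x, ρ x ∂μ) < ∞ ∧ ∀ γ ∈ Γ, γ.integral ρ = ∞

/-- `g` is a `1`-weak upper gradient of `u` in `A`: `g` is nonnegative, `μ`-measurable,
and the upper gradient inequality holds along `1`-a.e. curve in `A`. -/
def IsWeakUpperGradientOn (μ : Measure X) (u : X → ℝ) (g : X → ℝ≥0∞) (A : Set X) : Prop :=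
  AEMeasurable g μ ∧ ZeroMod μ {γ : Curve X | γ.In A ∧ ¬ UGIneq u g γ}

/-- A nonnegative function `g` belongs to `L¹_loc(A)`. -/
def LIntegrableLocOn (μ : Measure X) (g : X → ℝ≥0∞) (A : Set X) : Prop :=
  ∀ x ∈ A, ∃ r > (0 : ℝ), (∫⁻ y in A ∩ Metric.ball x r, g y ∂μ) < ∞

/-- `g` is the minimal `1`-weak upper gradient of `u` in `A`: a `1`-weak upper gradient
satisfying `g ≤ g'` `μ`-a.e. in `A` for every `1`-weak upper gradient `g' ∈ L¹_loc(A)`. -/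
def IsMinimalWUG (μ : Measure X) (u : X → ℝ) (g : X → ℝ≥0∞) (A : Set X) : Prop :=
  IsWeakUpperGradientOn μ u g A ∧
    ∀ g' : X → ℝ≥0∞, IsWeakUpperGradientOn μ u g' A → LIntegrableLocOn μ g' A →
      ∀ᵐ x ∂(μ.restrict A), g x ≤ g' x

/-- The Newtonian norm `‖u‖_{N^{1,1}(A)}` (valued in `ℝ≥0∞`). -/
def NNorm (μ : Measure X) (A : Set X) (u : X → ℝ) : ℝ≥0∞ :=
  (∫⁻ x in A, ENNReal.ofReal |u x| ∂μ) +
    ⨅ (g : X → ℝ≥0∞) (_ : IsWeakUpperGradientOn μ u g A), ∫⁻ x in A, g x ∂μ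

/-- `u ∈ N^{1,1}(A)`. -/
def MemN11 (μ : Measure X) (A : Set X) (u : X → ℝ) : Prop :=
  NNorm μ A u < ∞

/-- `u ∈ N^{1,1}_loc(A)`: every point of `A` has a ball `B` with `u ∈ N^{1,1}(A ∩ B)`. -/
def MemN11Loc (μ : Measure X) (A : Set X) (u : X → ℝ) : Prop :=
  ∀ x ∈ A, ∃ r > (0 : ℝ), NNorm μ (A ∩ Metric.ball x r) u < ∞

/-- `u ∈ N^{1,1}(Ω')` for every bounded open `Ω' ⊆ X`. -/
def MemN11LocBounded (μ : Measure X) (u : X → ℝ) : Prop :=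
  ∀ Ω' : Set X, IsOpen Ω' → Bornology.IsBounded Ω' → NNorm μ Ω' u < ∞

/-- `u ∈ N^{1,1}_0(Ω)`: `u ∈ N^{1,1}(X)` and `u = 0` outside `Ω`. -/
def MemN110 (μ : Measure X) (Ω : Set X) (u : X → ℝ) : Prop :=
  MemN11 μ Set.univ u ∧ ∀ x ∉ Ω, u x = 0

/-- The `1`-capacity `capa₁(A) = inf {‖u‖_{N^{1,1}(X)} : u ∈ N^{1,1}(X), u ≥ 1 on A}`. -/
def capa1 (μ : Measure X) (A : Set X) : ℝ≥0∞ :=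
  ⨅ (u : X → ℝ) (_ : MemN11 μ Set.univ u) (_ : ∀ x ∈ A, 1 ≤ u x), NNorm μ Set.univ u

/-- `U` is `1`-quasiopen: for every `ε > 0` there is an open `G` with `capa₁(G) < ε`
such that `U ∪ G` is open. -/
def QuasiOpen (μ : Measure X) (U : Set X) : Prop :=
  ∀ ε : ℝ, 0 < ε → ∃ G : Set X, IsOpen G ∧ capa1 μ G < ENNReal.ofReal ε ∧ IsOpen (U ∪ G)

/-- `u ∈ L¹_loc(A)`. -/
def MemL1Loc (μ : Measure X) (A : Set X) (u : X → ℝ) : Prop :=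
  AEMeasurable u (μ.restrict A) ∧
    ∀ x ∈ A, ∃ r > (0 : ℝ), (∫⁻ y in A ∩ Metric.ball x r, ENNReal.ofReal |u y| ∂μ) < ∞

/-- `v i → u` in `L¹_loc(A)`: every `x ∈ A` has a ball `B` with `v i → u` in `L¹(A ∩ B)`. -/
def L1LocConv (μ : Measure X) (A : Set X) (v : ℕ → X → ℝ) (u : X → ℝ) : Prop :=
  ∀ x ∈ A, ∃ r > (0 : ℝ),
    Filter.Tendsto (fun i => ∫⁻ y in A ∩ Metric.ball x r, ENNReal.ofReal |v i y - u y| ∂μ)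
      Filter.atTop (𝓝 0)

/-- `u` is locally Lipschitz on `Ω`. -/
def LocLipOn (u : X → ℝ) (Ω : Set X) : Prop :=
  ∀ x ∈ Ω, ∃ r > (0 : ℝ), ∃ K : ℝ≥0, LipschitzOnWith K u (Ω ∩ Metric.ball x r)

/-- The total variation `‖Du‖(Ω)` of `u` in an open set `Ω`: the infimum of
`liminf_i ∫_Ω g_{v i} dμ` over sequences of locally Lipschitz functions `v i → u`
in `L¹_loc(Ω)`, where `g_{v i}` is the minimal `1`-weak upper gradient of `v i` in `Ω`. -/
def tvOpen (μ : Measure X) (Ω : Set X) (u : X → ℝ) : ℝ≥0∞ :=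
  ⨅ (v : ℕ → X → ℝ) (g : ℕ → X → ℝ≥0∞) (_ : ∀ i, LocLipOn (v i) Ω)
    (_ : ∀ i, IsMinimalWUG μ (v i) (g i) Ω) (_ : L1LocConv μ Ω v u),
    Filter.liminf (fun i => ∫⁻ x in Ω, g i x ∂μ) Filter.atTop

/-- The total variation `‖Du‖(A)` of `u` in an arbitrary set `A`:
`inf {‖Du‖(Ω) : Ω ⊇ A open}`. -/
def tv (μ : Measure X) (A : Set X) (u : X → ℝ) : ℝ≥0∞ :=
  ⨅ (Ω : Set X) (_ : IsOpen Ω) (_ : A ⊆ Ω), tvOpen μ Ω u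

/-- The perimeter `P(E, A) = ‖Dχ_E‖(A)` for arbitrary `A`. -/
def perim (μ : Measure X) (E A : Set X) : ℝ≥0∞ :=
  tv μ A (Set.indicator E (fun _ => (1 : ℝ)))

/-- The perimeter `P(E, Ω) = ‖Dχ_E‖(Ω)` for open `Ω`. -/
def perimOpen (μ : Measure X) (E Ω : Set X) : ℝ≥0∞ :=
  tvOpen μ Ω (Set.indicator E (fun _ => (1 : ℝ)))

/-- The measure `μ` is doubling with constant `Cd`. -/
def Doubling (μ : Measure X) (Cd : ℝ) : Prop :=
  1 ≤ Cd ∧ ∀ (x : X) (r : ℝ), 0 < r →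
    0 < μ (Metric.ball x (2 * r)) ∧
      μ (Metric.ball x (2 * r)) ≤ ENNReal.ofReal Cd * μ (Metric.ball x r) ∧
      μ (Metric.ball x r) < ∞

/-- The space supports a `(1,1)`-Poincaré inequality with constants `CP, lam`. -/
def Poincare (μ : Measure X) (CP lam : ℝ) : Prop :=
  1 ≤ CP ∧ 1 ≤ lam ∧ ∀ (x : X) (r : ℝ), 0 < r → ∀ (u : X → ℝ) (g : X → ℝ≥0∞),
    MemL1Loc μ Set.univ u → IsUpperGradient u g →
      ENNReal.ofReal (⨍ y in Metric.ball x r, |u y - ⨍ z in Metric.ball x r, u z ∂μ| ∂μ)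
        ≤ ENNReal.ofReal (CP * r) *
            ((∫⁻ y in Metric.ball x (lam * r), g y ∂μ) / μ (Metric.ball x (lam * r)))

/-- The restricted spherical Hausdorff content of codimension one. -/
def HR (μ : Measure X) (R : ℝ) (A : Set X) : ℝ≥0∞ :=
  ⨅ (c : ℕ → X) (r : ℕ → ℝ) (_ : ∀ i, 0 < r i ∧ r i ≤ R)
    (_ : A ⊆ ⋃ i, Metric.ball (c i) (r i)),
    ∑' i, μ (Metric.ball (c i) (r i)) / ENNReal.ofReal (r i)

/-- The codimension-one Hausdorff measure `H(A) = lim_{R → 0} H_R(A)`. -/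
def Hcodim (μ : Measure X) (A : Set X) : ℝ≥0∞ :=
  ⨆ (R : ℝ) (_ : 0 < R), HR μ R A

/-- The lower approximate limit `u^∧`. -/
def lowerApprox (μ : Measure X) (u : X → ℝ) (x : X) : EReal :=
  sSup ((fun t : ℝ => (t : EReal)) ''
    {t : ℝ | Filter.Tendsto
      (fun r => μ (Metric.ball x r ∩ {y | u y < t}) / μ (Metric.ball x r))
      (𝓝[>] (0 : ℝ)) (𝓝 0)})

/-- The upper approximate limit `u^∨`. -/
def upperApprox (μ : Measure X) (u : X → ℝ) (x : X) : EReal :=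
  sInf ((fun t : ℝ => (t : EReal)) ''
    {t : ℝ | Filter.Tendsto
      (fun r => μ (Metric.ball x r ∩ {y | t < u y}) / μ (Metric.ball x r))
      (𝓝[>] (0 : ℝ)) (𝓝 0)})

/-- `u ∈ BV_loc(X)`: `u ∈ L¹_loc(X)` with `‖Du‖(Ω') < ∞` for every bounded open `Ω'`. -/
def MemBVLoc (μ : Measure X) (u : X → ℝ) : Prop :=
  MemL1Loc μ Set.univ u ∧
    ∀ Ω' : Set X, IsOpen Ω' → Bornology.IsBounded Ω' → tvOpen μ Ω' u < ∞

/-- The measure-theoretic interior `I_E`. -/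
def mInterior (μ : Measure X) (E : Set X) : Set X :=
  {x | Filter.Tendsto (fun r => μ (Metric.ball x r \ E) / μ (Metric.ball x r))
    (𝓝[>] (0 : ℝ)) (𝓝 0)}

/-- The measure-theoretic exterior `O_E`. -/
def mExterior (μ : Measure X) (E : Set X) : Set X :=
  {x | Filter.Tendsto (fun r => μ (Metric.ball x r ∩ E) / μ (Metric.ball x r))
    (𝓝[>] (0 : ℝ)) (𝓝 0)}

/-- The measure-theoretic boundary `∂*E`: the points where both `E` and its complement
have positive upper density. -/
def mBoundary (μ : Measure X) (E : Set X) : Set X :=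
  {x | 0 < Filter.limsup (fun r => μ (Metric.ball x r ∩ E) / μ (Metric.ball x r))
        (𝓝[>] (0 : ℝ)) ∧
       0 < Filter.limsup (fun r => μ (Metric.ball x r \ E) / μ (Metric.ball x r))
        (𝓝[>] (0 : ℝ))}


set_option linter.unusedSectionVars false
set_option linter.unusedVariables false

theorem ftc_le {φ : ℝ → ℝ} {K : ℝ≥0} {L : ℝ} (hL : 0 ≤ L) (hφ : LipschitzOnWith K φ (Icc 0 L))
    {G : ℝ → ℝ≥0∞}
    (hG : ∀ᵐ t ∂(volume.restrict (Icc (0:ℝ) L)), ENNReal.ofReal |deriv φ t| ≤ G t) :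
    ENNReal.ofReal |φ 0 - φ L| ≤ ∫⁻ t in Icc (0:ℝ) L, G t := by
  have hac : AbsolutelyContinuousOnInterval φ 0 L := by
    apply LipschitzOnWith.absolutelyContinuousOnInterval (K := K)
    rwa [uIcc_of_le hL]
  have h := hac.integral_deriv_eq_sub
  rw [abs_sub_comm, ← h, intervalIntegral.integral_of_le hL, ← integral_Icc_eq_integral_Ioc,
    ← Real.enorm_eq_ofReal_abs]
  refine (enorm_integral_le_lintegral_enorm _).trans ?_
  refine lintegral_mono_ae ?_
  filter_upwards [hG] with t ht
  rwa [Real.enorm_eq_ofReal_abs]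

theorem deriv_bound {a b₁ b₂ : ℝ → ℝ} {t α β : ℝ} (hα : 0 ≤ α) (hβ : 0 ≤ β)
    (h₁ : DifferentiableAt ℝ b₁ t) (h₂ : DifferentiableAt ℝ b₂ t)
    (h : ∀ᶠ s in 𝓝 t, |a s - a t| ≤ α * |b₁ s - b₁ t| + β * |b₂ s - b₂ t|) :
    |deriv a t| ≤ α * |deriv b₁ t| + β * |deriv b₂ t| := by
  by_cases ha : DifferentiableAt ℝ a t
  · have ta := (hasDerivAt_iff_tendsto_slope.1 ha.hasDerivAt).abs
    have t1 := (hasDerivAt_iff_tendsto_slope.1 h₁.hasDerivAt).abs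
    have t2 := (hasDerivAt_iff_tendsto_slope.1 h₂.hasDerivAt).abs
    refine le_of_tendsto_of_tendsto ta ((t1.const_mul α).add (t2.const_mul β)) ?_
    filter_upwards [h.filter_mono nhdsWithin_le_nhds, self_mem_nhdsWithin] with s hs hst
    have hst' : s - t ≠ 0 := sub_ne_zero.2 hst
    simp only [slope_def_field, abs_div]
    have : 0 < |s - t| := abs_pos.2 hst'
    rw [← mul_div_assoc, ← mul_div_assoc, ← add_div]
    gcongr
  · rw [deriv_zero_of_not_differentiableAt ha, abs_zero]
    positivity

theorem deriv_bound_one {φ : ℝ → ℝ} {t c : ℝ} (hc : 0 ≤ c)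
    (h : ∀ᶠ s in 𝓝 t, φ t - φ s ≤ c * |s - t|) : |deriv φ t| ≤ c := by
  by_cases ha : DifferentiableAt ℝ φ t
  · have ta := (hasDerivAt_iff_tendsto_slope.1 ha.hasDerivAt)
    rw [abs_le]
    constructor
    · have := ta.mono_left (nhdsWithin_mono t (s := Ioi t) (fun x hx => ne_of_gt hx))
      refine ge_of_tendsto this ?_
      filter_upwards [h.filter_mono nhdsWithin_le_nhds, self_mem_nhdsWithin] with s hs hst
      have hst' : 0 < s - t := sub_pos.2 hst
      rw [slope_def_field, le_div_iff₀ hst']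
      rw [abs_of_pos hst'] at hs
      linarith
    · have := ta.mono_left (nhdsWithin_mono t (s := Iio t) (fun x hx => ne_of_lt hx))
      refine le_of_tendsto this ?_
      filter_upwards [h.filter_mono nhdsWithin_le_nhds, self_mem_nhdsWithin] with s hs hst
      have hst' : s - t < 0 := sub_neg.2 hst
      rw [slope_def_field, div_le_iff_of_neg hst']
      rw [abs_of_neg hst'] at hs
      linarith
  · rw [deriv_zero_of_not_differentiableAt ha, abs_zero]
    exact hc

theorem ae_deriv_le {φ : ℝ → ℝ} {G : ℝ → ℝ≥0∞} {L : ℝ} (hL : 0 ≤ L)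
    (hGm : AEMeasurable G (volume.restrict (Icc (0:ℝ) L)))
    (hGi : ∫⁻ t in Icc (0:ℝ) L, G t < ∞)
    (h : ∀ s t, 0 ≤ s → s ≤ t → t ≤ L → ENNReal.ofReal |φ s - φ t| ≤ ∫⁻ r in Icc s t, G r) :
    ∀ᵐ t ∂(volume.restrict (Icc (0:ℝ) L)), ENNReal.ofReal |deriv φ t| ≤ G t := by
  have hint : IntegrableOn (fun t => (G t).toReal) (Icc 0 L) :=
    integrable_toReal_of_lintegral_ne_top hGm hGi.ne
  have hII : IntervalIntegrable (fun t => (G t).toReal) volume 0 L := by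
    rw [intervalIntegrable_iff_integrableOn_Icc_of_le hL]; exact hint
  have hfin : ∀ᵐ t ∂(volume.restrict (Icc (0:ℝ) L)), G t < ∞ := ae_lt_top' hGm hGi.ne
  have key : ∀ s t, 0 ≤ s → s ≤ t → t ≤ L → |φ s - φ t| ≤ ∫ r in s..t, (G r).toReal := by
    intro s t hs hst ht
    have hsub : Icc s t ⊆ Icc 0 L := Icc_subset_Icc hs ht
    have hle : volume.restrict (Icc s t) ≤ volume.restrict (Icc 0 L) :=
      Measure.restrict_mono hsub le_rfl
    rw [intervalIntegral.integral_of_le hst, ← integral_Icc_eq_integral_Ioc,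
      integral_toReal (hGm.mono_measure hle) (ae_mono hle hfin)]
    rw [← ENNReal.ofReal_le_iff_le_toReal]
    · exact h s t hs hst ht
    · exact ((lintegral_mono' hle le_rfl).trans_lt hGi).ne
  have hd := hII.ae_hasDerivAt_integral
  rw [uIcc_of_le hL] at hd
  have h0 : ∀ᵐ t : ℝ, t ≠ 0 := by simp [ae_iff, measure_singleton]
  have h1 : ∀ᵐ t : ℝ, t ≠ L := by simp [ae_iff, measure_singleton]
  filter_upwards [ae_restrict_of_ae hd, hfin, ae_restrict_mem measurableSet_Icc,
    ae_restrict_of_ae h0, ae_restrict_of_ae h1] with t ht htf htm ht0 ht1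
  have hD := ht htm 0 ⟨le_rfl, hL⟩
  have hnb : Icc 0 L ∈ 𝓝 t := Icc_mem_nhds (lt_of_le_of_ne htm.1 (Ne.symm ht0)) (lt_of_le_of_ne htm.2 ht1)
  have := deriv_bound (a := φ) (b₁ := fun x => ∫ r in (0:ℝ)..x, (G r).toReal) (b₂ := fun _ => 0)
    (t := t) (α := 1) (β := 0) zero_le_one le_rfl hD.differentiableAt (differentiableAt_const _) ?_
  · rw [hD.deriv] at this
    simp only [one_mul, zero_mul, add_zero, ENNReal.abs_toReal] at this
    exact ENNReal.ofReal_le_of_le_toReal this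
  · filter_upwards [hnb] with s hs
    have hi : ∀ x ∈ Icc 0 L, IntervalIntegrable (fun t => (G t).toReal) volume 0 x := by
      intro x hx
      exact hII.mono_set (by rw [uIcc_of_le hx.1, uIcc_of_le hL]; exact Icc_subset_Icc le_rfl hx.2)
    simp only [one_mul, zero_mul, add_zero]
    rw [intervalIntegral.integral_interval_sub_left (hi s hs) (hi t htm)]
    rcases le_total s t with hst | hst
    · rw [intervalIntegral.integral_symm, abs_neg]
      exact (key s t hs.1 hst htm.2).trans (le_abs_self _)
    · rw [abs_sub_comm]
      exact (key t s htm.1 hst hs.2).trans (le_abs_self _)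

theorem locLip_comp {v : X → ℝ} {Ω : Set X} (hΩ : IsOpen Ω) (hv : LocLipOn v Ω) (γ : Curve X)
    (hγ : γ.In Ω) : ∃ K : ℝ≥0, LipschitzOnWith K (fun t => v (γ.toFun t)) (Icc 0 γ.len) := by
  apply LocallyLipschitzOn.exists_lipschitzOnWith_of_compact isCompact_Icc
  intro t ht
  obtain ⟨r, hr, K, hK⟩ := hv _ (hγ t ht)
  have hc := γ.lip.continuousOn t ht
  refine ⟨K, _, inter_mem (hc (ball_mem_nhds _ hr)) self_mem_nhdsWithin, ?_⟩
  have h1 : LipschitzOnWith 1 γ.toFun (γ.toFun ⁻¹' ball (γ.toFun t) r ∩ Icc 0 γ.len) :=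
    γ.lip.mono inter_subset_right
  have := hK.comp h1 (fun s hs => ⟨hγ s hs.2, hs.1⟩)
  rw [mul_one] at this
  exact this

/-- subcurve -/
def Curve.sub (γ : Curve X) (s t : ℝ) (hs : 0 ≤ s) (hst : s ≤ t) (ht : t ≤ γ.len) : Curve X where
  len := t - s
  len_nonneg := sub_nonneg.2 hst
  toFun := fun r => γ.toFun (s + r)
  lip := by
    have h1 : LipschitzOnWith 1 (fun r : ℝ => s + r) (Icc 0 (t - s)) := by
      apply LipschitzWith.lipschitzOnWith
      exact LipschitzWith.of_dist_le_mul (by intro x y; simp)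
    have := γ.lip.comp h1 (fun r hr => ⟨by linarith [hr.1], by linarith [hr.2]⟩)
    rw [mul_one] at this
    exact this

theorem Curve.sub_integral (γ : Curve X) (s t : ℝ) (hs : 0 ≤ s) (hst : s ≤ t) (ht : t ≤ γ.len)
    (g : X → ℝ≥0∞) : (γ.sub s t hs hst ht).integral g = ∫⁻ r in Icc s t, g (γ.toFun r) := by
  simp only [Curve.integral, Curve.sub]
  rw [← lintegral_indicator measurableSet_Icc, ← lintegral_indicator measurableSet_Icc]
  rw [← lintegral_add_left_eq_self (μ := volume) (fun r => (Icc s t).indicator (fun r => g (γ.toFun r)) r) s]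
  congr 1
  ext r
  by_cases h : r ∈ Icc 0 (t - s)
  · rw [indicator_of_mem h, indicator_of_mem]
    exact ⟨by linarith [h.1], by linarith [h.2]⟩
  · rw [indicator_of_notMem h, indicator_of_notMem]
    intro h'
    exact h ⟨by linarith [h'.1], by linarith [h'.2]⟩

theorem Curve.sub_in (γ : Curve X) (s t : ℝ) (hs : 0 ≤ s) (hst : s ≤ t) (ht : t ≤ γ.len)
    {A : Set X} (h : γ.In A) : (γ.sub s t hs hst ht).In A := by
  intro r hr
  have h1 := hr.1
  have h2 : r ≤ t - s := hr.2
  exact h _ ⟨by linarith, by linarith⟩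

theorem Curve.sub_le (γ : Curve X) (s t : ℝ) (hs : 0 ≤ s) (hst : s ≤ t) (ht : t ≤ γ.len)
    (g : X → ℝ≥0∞) : (γ.sub s t hs hst ht).integral g ≤ γ.integral g := by
  rw [Curve.sub_integral]
  exact lintegral_mono' (Measure.restrict_mono (Icc_subset_Icc hs ht) le_rfl) le_rfl

/-- derivative bound along almost every curve -/
def DerBound (μ : Measure X) (v : X → ℝ) (g : X → ℝ≥0∞) (Ω : Set X) : Prop :=
  ∃ ρ : X → ℝ≥0∞, Measurable ρ ∧ (∫⁻ x, ρ x ∂μ) < ∞ ∧ ∀ γ : Curve X, γ.In Ω →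
    γ.integral ρ ≠ ∞ → ∀ᵐ t ∂(volume.restrict (Icc (0:ℝ) γ.len)),
      ENNReal.ofReal |deriv (fun t => v (γ.toFun t)) t| ≤ g (γ.toFun t)

theorem DerBound.wug {μ : Measure X} {v : X → ℝ} {g : X → ℝ≥0∞} {Ω : Set X} (hΩ : IsOpen Ω)
    (hv : LocLipOn v Ω) (hg : AEMeasurable g μ) (h : DerBound μ v g Ω) :
    IsWeakUpperGradientOn μ v g Ω := by
  obtain ⟨ρ, hρ, hρi, H⟩ := h
  refine ⟨hg, ρ, hρ, hρi, ?_⟩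
  rintro γ ⟨hγ, hn⟩
  by_contra hne
  obtain ⟨K, hK⟩ := locLip_comp hΩ hv γ hγ
  exact hn (ftc_le γ.len_nonneg hK (H γ hγ hne))

theorem curve_aemeas (γ : Curve X) {g : X → ℝ≥0∞} (hg : Measurable g) :
    AEMeasurable (fun t => g (γ.toFun t)) (volume.restrict (Icc (0:ℝ) γ.len)) :=
  hg.comp_aemeasurable (γ.lip.continuousOn.aemeasurable measurableSet_Icc)

theorem loc_int [SecondCountableTopology X] {μ : Measure X} {g : X → ℝ≥0∞} (hg : Measurable g)
    {Ω : Set X} (hΩ : IsOpen Ω) (h : LIntegrableLocOn μ g Ω) :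
    ∃ ρ : X → ℝ≥0∞, Measurable ρ ∧ (∫⁻ x, ρ x ∂μ) < ∞ ∧ ∀ γ : Curve X, γ.In Ω →
      γ.integral ρ ≠ ∞ → γ.integral g < ∞ := by
  choose! r hr hI using h
  obtain ⟨T, hTs, hTc, hT⟩ := TopologicalSpace.countable_cover_nhdsWithin (s := Ω)
    (f := fun x => ball x (r x)) (fun x hx => mem_nhdsWithin_of_mem_nhds (ball_mem_nhds _ (hr x hx)))
  haveI : Countable T := hTc.to_subtype
  obtain ⟨ε, hε, hεs⟩ := ENNReal.exists_pos_sum_of_countable' (one_ne_zero (α := ℝ≥0∞)) T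
  set S : T → Set X := fun i => Ω ∩ ball (i:X) (r i) with hS
  have hSm : ∀ i, MeasurableSet (S i) := fun i => hΩ.measurableSet.inter measurableSet_ball
  set I : T → ℝ≥0∞ := fun i => ∫⁻ x in S i, g x ∂μ with hIdef
  have hIf : ∀ i, I i < ∞ := fun i => hI i (hTs i.2)
  set c : T → ℝ≥0∞ := fun i => ε i / (1 + I i) with hc
  have hcpos : ∀ i, c i ≠ 0 := by
    intro i
    simp only [hc, ne_eq, ENNReal.div_eq_zero_iff, not_or]
    exact ⟨(hε i).ne', ENNReal.add_ne_top.2 ⟨ENNReal.one_ne_top, (hIf i).ne⟩⟩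
  have hctop : ∀ i, c i ≠ ∞ := by
    intro i
    have : ε i ≠ ∞ := ((ENNReal.le_tsum i).trans_lt (hεs.trans ENNReal.one_lt_top)).ne
    exact ENNReal.div_ne_top this (by simp)
  refine ⟨fun x => ∑' i, c i * (S i).indicator g x, ?_, ?_, ?_⟩
  · exact Measurable.ennreal_tsum fun i => (hg.indicator (hSm i)).const_mul _
  · rw [lintegral_tsum fun i => ((hg.indicator (hSm i)).const_mul _).aemeasurable]
    refine lt_of_le_of_lt (ENNReal.tsum_le_tsum (g := ε) fun i => ?_) (hεs.trans ENNReal.one_lt_top)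
    rw [lintegral_const_mul _ (hg.indicator (hSm i)), lintegral_indicator (hSm i)]
    change ε i / (1 + I i) * I i ≤ ε i
    rw [div_eq_mul_inv, mul_assoc]
    refine mul_le_of_le_one_right' ?_
    rw [mul_comm, ← div_eq_mul_inv]
    exact ENNReal.div_le_of_le_mul (by rw [one_mul]; exact le_add_self)
  · intro γ hγ hne
    have hcomp : IsCompact (γ.toFun '' Icc 0 γ.len) := isCompact_Icc.image_of_continuousOn γ.lip.continuousOn
    obtain ⟨F, hF⟩ := hcomp.elim_finite_subcover (fun i : T => ball (i:X) (r i)) (fun i => isOpen_ball) (by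
      rintro _ ⟨t, ht, rfl⟩
      have := hT (hγ t ht)
      simp only [mem_iUnion] at this ⊢
      obtain ⟨x, hx, hx'⟩ := this
      exact ⟨⟨x, hx⟩, hx'⟩)
    have hCf : (∑ i ∈ F, (c i)⁻¹) ≠ ∞ := by
      rw [ENNReal.sum_ne_top]
      exact fun i _ => ENNReal.inv_ne_top.2 (hcpos i)
    have : γ.integral g ≤ (∑ i ∈ F, (c i)⁻¹) * γ.integral (fun x => ∑' i, c i * (S i).indicator g x) := by
      simp only [Curve.integral]
      rw [← lintegral_const_mul' _ _ hCf]
      refine setLIntegral_mono' measurableSet_Icc fun t ht => ?_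
      have := hF (mem_image_of_mem _ ht)
      simp only [mem_iUnion] at this
      obtain ⟨i, hi, hit⟩ := this
      calc g (γ.toFun t) = (c i)⁻¹ * (c i * (S i).indicator g (γ.toFun t)) := by
            rw [← mul_assoc, ENNReal.inv_mul_cancel (hcpos i) (hctop i), one_mul, indicator_of_mem]
            exact ⟨hγ t ht, hit⟩
        _ ≤ _ := by
            gcongr
            · exact Finset.single_le_sum (f := fun i => (c i)⁻¹) (fun _ _ => zero_le) hi
            · exact ENNReal.le_tsum (f := fun i => c i * (S i).indicator g (γ.toFun t)) i
    exact this.trans_lt (ENNReal.mul_lt_top hCf.lt_top hne.lt_top)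

theorem ae_curve {μ : Measure X} {N : Set X} (hN : MeasurableSet N) (γ : Curve X)
    (h : γ.integral (N.indicator fun _ => ∞) ≠ ∞) :
    ∀ᵐ t ∂(volume.restrict (Icc (0:ℝ) γ.len)), γ.toFun t ∉ N := by
  have hm := curve_aemeas γ ((measurable_const (a := (∞:ℝ≥0∞))).indicator hN)
  filter_upwards [ae_lt_top' hm h] with t ht htN
  rw [indicator_of_mem htN] at ht
  exact lt_irrefl _ ht

theorem wug_derBound [SecondCountableTopology X] {μ : Measure X} {v : X → ℝ} {g : X → ℝ≥0∞}
    {Ω : Set X} (hΩ : IsOpen Ω) (h : IsWeakUpperGradientOn μ v g Ω) (hi : LIntegrableLocOn μ g Ω) :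
    DerBound μ v g Ω := by
  obtain ⟨hg, ρ₀, hρ₀, hρ₀i, H⟩ := h
  obtain ⟨N, hNs, hN, hN0⟩ := exists_measurable_superset_of_null hg.ae_eq_mk
  have hi' : LIntegrableLocOn μ (hg.mk g) Ω := by
    intro x hx
    obtain ⟨r, hr, hh⟩ := hi x hx
    refine ⟨r, hr, ?_⟩
    rwa [← lintegral_congr_ae (ae_restrict_of_ae hg.ae_eq_mk)]
  obtain ⟨ρ₁, hρ₁, hρ₁i, H1⟩ := loc_int hg.measurable_mk hΩ hi'
  have hmN : Measurable (N.indicator fun _ => (∞:ℝ≥0∞)) := measurable_const.indicator hN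
  refine ⟨fun x => ρ₀ x + (ρ₁ x + N.indicator (fun _ => ∞) x), hρ₀.add (hρ₁.add hmN), ?_, ?_⟩
  · rw [lintegral_add_left hρ₀, lintegral_add_left hρ₁, lintegral_indicator hN]
    simp [hN0, hρ₀i, hρ₁i]
  · intro γ hγ hne
    have hle : ∀ ρ' : X → ℝ≥0∞, (∀ x, ρ' x ≤ ρ₀ x + (ρ₁ x + N.indicator (fun _ => ∞) x)) →
        γ.integral ρ' ≠ ∞ := fun ρ' h' =>
      (lt_of_le_of_lt (lintegral_mono fun t => h' _) hne.lt_top).ne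
    have h0 := hle ρ₀ (fun x => le_self_add)
    have h1 := H1 γ hγ (hle ρ₁ fun x => le_self_add.trans le_add_self)
    have h2 := ae_curve (μ := μ) hN γ (hle _ fun x => le_add_self.trans le_add_self)
    have heq : ∀ᵐ t ∂(volume.restrict (Icc (0:ℝ) γ.len)), g (γ.toFun t) = hg.mk g (γ.toFun t) := by
      filter_upwards [h2] with t ht
      by_contra hne
      exact ht (hNs hne)
    have hres := ae_deriv_le (φ := fun t => v (γ.toFun t)) (G := fun t => hg.mk g (γ.toFun t))
      γ.len_nonneg (curve_aemeas γ hg.measurable_mk) h1 ?_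
    · filter_upwards [hres, heq] with t ht1 ht2
      rwa [ht2]
    · intro s t hs hst ht
      have hu : UGIneq v g (γ.sub s t hs hst ht) := by
        by_contra hcon
        have := H _ ⟨γ.sub_in s t hs hst ht hγ, hcon⟩
        exact h0 (top_le_iff.1 (this ▸ γ.sub_le s t hs hst ht ρ₀))
      rw [UGIneq, Curve.sub_integral] at hu
      simp only [Curve.sub, add_zero, add_sub_cancel] at hu
      refine hu.trans (le_of_eq (lintegral_congr_ae ?_))
      exact ae_mono (Measure.restrict_mono (Icc_subset_Icc hs ht) le_rfl) heq

theorem DerBound.iInf {μ : Measure X} {v : X → ℝ} {g : ℕ → X → ℝ≥0∞} {Ω : Set X}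
    (h : ∀ n, DerBound μ v (g n) Ω) : DerBound μ v (fun x => ⨅ n, g n x) Ω := by
  choose ρ hρ hρi H using h
  obtain ⟨ε, hε, hεs⟩ := ENNReal.exists_pos_sum_of_countable' (one_ne_zero (α := ℝ≥0∞)) ℕ
  have hεt : ∀ i, ε i ≠ ∞ := fun i => ((ENNReal.le_tsum i).trans_lt (hεs.trans ENNReal.one_lt_top)).ne
  set I : ℕ → ℝ≥0∞ := fun i => ∫⁻ x, ρ i x ∂μ with hIdef
  set c : ℕ → ℝ≥0∞ := fun i => ε i / (1 + I i) with hc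
  have hcpos : ∀ i, c i ≠ 0 := by
    intro i
    simp only [hc, ne_eq, ENNReal.div_eq_zero_iff, not_or]
    exact ⟨(hε i).ne', ENNReal.add_ne_top.2 ⟨ENNReal.one_ne_top, (hρi i).ne⟩⟩
  have hctop : ∀ i, c i ≠ ∞ := fun i => ENNReal.div_ne_top (hεt i) (by simp)
  refine ⟨fun x => ∑' i, c i * ρ i x, Measurable.ennreal_tsum fun i => (hρ i).const_mul _, ?_, ?_⟩
  · rw [lintegral_tsum fun i => ((hρ i).const_mul _).aemeasurable]
    refine lt_of_le_of_lt (ENNReal.tsum_le_tsum (g := ε) fun i => ?_) (hεs.trans ENNReal.one_lt_top)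
    rw [lintegral_const_mul _ (hρ i)]
    change ε i / (1 + I i) * I i ≤ ε i
    rw [div_eq_mul_inv, mul_assoc]
    refine mul_le_of_le_one_right' ?_
    rw [mul_comm, ← div_eq_mul_inv]
    exact ENNReal.div_le_of_le_mul (by rw [one_mul]; exact le_add_self)
  · intro γ hγ hne
    have : ∀ n, γ.integral (ρ n) ≠ ∞ := by
      intro n hn
      apply hne
      rw [← top_le_iff]
      have h1 : c n * γ.integral (ρ n) = ∞ := by rw [hn]; exact ENNReal.mul_top (hcpos n)
      rw [← h1]
      simp only [Curve.integral]
      rw [← lintegral_const_mul' _ _ (hctop n)]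
      exact lintegral_mono fun t => ENNReal.le_tsum (f := fun i => c i * ρ i (γ.toFun t)) n
    have h2 := ae_all_iff.2 fun n => H n γ hγ (this n)
    filter_upwards [h2] with t ht
    exact le_iInf ht

theorem exists_minimal [SecondCountableTopology X] (μ : Measure X) [SigmaFinite μ] {v : X → ℝ}
    {Ω : Set X} (hΩ : IsOpen Ω) (hv : LocLipOn v Ω) : ∃ g, IsMinimalWUG μ v g Ω := by
  set 𝒢 : Set (X → ℝ≥0∞) := {g | IsWeakUpperGradientOn μ v g Ω ∧ LIntegrableLocOn μ g Ω} with h𝒢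
  by_cases hne : 𝒢.Nonempty
  swap
  · refine ⟨fun _ => ∞, ⟨aemeasurable_const, 0, measurable_const, by simp, ?_⟩, ?_⟩
    · rintro γ ⟨_, hγ⟩
      exfalso
      apply hγ
      rw [UGIneq]
      simp only [Curve.integral, lintegral_const, MeasurableSet.univ, Measure.restrict_apply, univ_inter,
        Real.volume_Icc, sub_zero]
      rcases γ.len_nonneg.eq_or_lt with h | h
      · rw [← h]; simp
      · rw [ENNReal.top_mul (by simpa using h)]; exact le_top
    · intro g' h1 h2
      exact absurd ⟨g', h1, h2⟩ hne
  -- closure under countable infima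
  have hinf : ∀ g : ℕ → X → ℝ≥0∞, (∀ n, g n ∈ 𝒢) → (fun x => ⨅ n, g n x) ∈ 𝒢 := by
    intro g hg
    refine ⟨DerBound.wug hΩ hv (AEMeasurable.iInf fun n => (hg n).1.1)
      (DerBound.iInf fun n => wug_derBound hΩ (hg n).1 (hg n).2), ?_⟩
    intro x hx
    obtain ⟨r, hr, h⟩ := (hg 0).2 x hx
    exact ⟨r, hr, (lintegral_mono fun y => iInf_le _ 0).trans_lt h⟩
  set ν : Measure X := (μ.restrict Ω).toFinite with hν
  set J : (X → ℝ≥0∞) → ℝ≥0∞ := fun g => ∫⁻ x, (1 + g x)⁻¹ ∂ν with hJ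
  have hJfin : ∀ g, J g ≤ ν univ := by
    intro g
    rw [← lintegral_one]
    exact lintegral_mono fun x => ENNReal.inv_le_one.2 le_self_add
  set s : ℝ≥0∞ := ⨆ g ∈ 𝒢, J g with hs
  have hsle : ∀ g ∈ 𝒢, J g ≤ s := fun g hg => le_iSup₂ (f := fun g (_ : g ∈ 𝒢) => J g) g hg
  have hsfin : s ≠ ∞ := (lt_of_le_of_lt (iSup₂_le fun g _ => hJfin g) (measure_lt_top ν univ)).ne
  have hex : ∃ g₀ ∈ 𝒢, J g₀ = s := by
    have : ∀ n : ℕ, ∃ g ∈ 𝒢, s - (n + 1 : ℝ≥0∞)⁻¹ ≤ J g := by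
      intro n
      by_contra hcon
      push Not at hcon
      have h1 : s ≤ s - (n + 1 : ℝ≥0∞)⁻¹ := iSup₂_le fun g hg => (hcon g hg).le
      obtain ⟨g, hg⟩ := hne
      have h2 : s ≠ 0 := by
        intro h0
        have := hcon g hg
        rw [h0] at this
        simp at this
      exact absurd h1 (not_le.2 (ENNReal.sub_lt_self hsfin h2 (by simp)))
    choose g hg hgJ using this
    refine ⟨_, hinf g hg, le_antisymm (hsle _ (hinf g hg)) ?_⟩
    have hlim : Tendsto (fun n : ℕ => s - (n + 1 : ℝ≥0∞)⁻¹) atTop (𝓝 (s - 0)) := by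
      apply ENNReal.Tendsto.sub tendsto_const_nhds
      · have := ENNReal.tendsto_inv_nat_nhds_zero.comp (tendsto_add_atTop_nat 1)
        simpa [Function.comp_def] using this
      · exact Or.inl hsfin
    rw [tsub_zero] at hlim
    refine le_of_tendsto' hlim fun n => (hgJ n).trans ?_
    refine lintegral_mono fun x => ?_
    gcongr
    exact iInf_le _ n
  obtain ⟨g₀, hg₀, hg₀s⟩ := hex
  refine ⟨g₀, hg₀.1, ?_⟩
  intro g' h1 h2
  have hmin : (fun x => ⨅ n : ℕ, (if n = 0 then g₀ else g') x) ∈ 𝒢 := by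
    apply hinf
    intro n
    by_cases hn : n = 0
    · simpa [hn] using hg₀
    · simp only [hn, if_false]; exact ⟨h1, h2⟩
  set m : X → ℝ≥0∞ := fun x => ⨅ n : ℕ, (if n = 0 then g₀ else g') x with hm
  have hm0 : ∀ x, m x ≤ g₀ x := fun x => (iInf_le _ 0).trans (by simp)
  have hm1 : ∀ x, m x ≤ g' x := fun x => (iInf_le _ 1).trans (by simp)
  have hac : ν ≪ μ := (toFinite_absolutelyContinuous _).trans Measure.restrict_le_self.absolutelyContinuous
  have hae : (fun x => (1 + g₀ x)⁻¹) =ᵐ[ν] fun x => (1 + m x)⁻¹ := by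
    refine ae_eq_of_ae_le_of_lintegral_le (ae_of_all _ fun x => ?_) ?_ ?_ ?_
    · have := hm0 x
      change (1 + g₀ x)⁻¹ ≤ (1 + m x)⁻¹
      gcongr
    · exact ((hJfin _).trans_lt (measure_lt_top ν univ)).ne
    · exact ((hmin.1.1.mono_ac hac).const_add 1).inv
    · change J m ≤ J g₀
      rw [hg₀s]; exact hsle _ hmin
  have hae2 : ∀ᵐ x ∂(μ.restrict Ω), (1 + g₀ x)⁻¹ = (1 + m x)⁻¹ :=
    (absolutelyContinuous_toFinite _).ae_le hae
  filter_upwards [hae2] with x hx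
  rw [inv_inj] at hx
  have := (ENNReal.add_right_inj ENNReal.one_ne_top).1 hx
  rw [this]; exact hm1 x

theorem Doubling.fin {μ : Measure X} {Cd : ℝ} (h : Doubling μ Cd) (x : X) (r : ℝ) : μ (ball x r) < ∞ := by
  rcases le_or_gt r 0 with hr | hr
  · rw [ball_eq_empty.2 hr]; simp
  · exact (h.2 x r hr).2.2

theorem Doubling.pos {μ : Measure X} {Cd : ℝ} (h : Doubling μ Cd) (x : X) {r : ℝ} (hr : 0 < r) :
    0 < μ (ball x r) := by
  have := (h.2 x (r/2) (by linarith)).1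
  rwa [mul_div_cancel₀ _ (two_ne_zero)] at this

theorem Doubling.le_pow {μ : Measure X} {Cd : ℝ} (h : Doubling μ Cd) (x : X) {r : ℝ} (hr : 0 < r) (n : ℕ) :
    μ (ball x (2 ^ n * r)) ≤ ENNReal.ofReal Cd ^ n * μ (ball x r) := by
  induction n with
  | zero => simp
  | succ n ih =>
    have := (h.2 x (2^n * r) (by positivity)).2.1
    rw [← mul_assoc, ← pow_succ'] at this
    refine this.trans ?_
    rw [pow_succ', mul_assoc]
    gcongr

theorem Doubling.proper [CompleteSpace X] {μ : Measure X} {Cd : ℝ} (h : Doubling μ Cd) :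
    ProperSpace X := by
  refine ⟨fun x R => ?_⟩
  refine TotallyBounded.isCompact_of_isClosed ?_ isClosed_closedBall
  rw [totallyBounded_iff]
  intro ε hε
  by_contra hcon
  push Not at hcon
  obtain ⟨f, hf, hff⟩ := exists_seq_of_forall_finset_exists (fun y => y ∈ closedBall x R)
    (fun y z => ε ≤ dist y z) (by
      intro s hs
      have := hcon s s.finite_toSet
      rw [not_subset] at this
      obtain ⟨y, hy, hys⟩ := this
      refine ⟨y, hy, fun z hz => ?_⟩
      by_contra hlt
      push Not at hlt
      apply hys
      simp only [mem_iUnion]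
      exact ⟨z, hz, by rw [mem_ball, dist_comm]; exact hlt⟩)
  have hdisj : Pairwise (Function.onFun Disjoint fun n => ball (f n) (ε/2)) := by
    intro m n hmn
    apply ball_disjoint_ball
    rcases lt_or_gt_of_ne hmn with h' | h'
    · linarith [hff _ _ h']
    · have := hff _ _ h'
      rw [dist_comm] at this
      linarith
  have hR0 : 0 ≤ R := by
    have := hf 0
    rw [mem_closedBall] at this
    exact dist_nonneg.trans this
  obtain ⟨m, hm⟩ := pow_unbounded_of_one_lt ((R + R + ε)/(ε/2)) (one_lt_two)
  have hm' : R + R + ε ≤ 2 ^ m * (ε/2) := by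
    rw [div_lt_iff₀ (by positivity)] at hm; linarith
  have hC : ENNReal.ofReal Cd ≠ 0 := by
    simp; linarith [h.1]
  have key : ∀ n, μ (ball x (R+ε)) / ENNReal.ofReal Cd ^ m ≤ μ (ball (f n) (ε/2)) := by
    intro n
    apply ENNReal.div_le_of_le_mul'
    refine le_trans (measure_mono ?_) (h.le_pow (f n) (r := ε/2) (by positivity) m)
    apply ball_subset_ball'
    have := hf n
    rw [mem_closedBall, dist_comm] at this
    linarith
  have hpos : 0 < μ (ball x (R+ε)) / ENNReal.ofReal Cd ^ m := by
    apply ENNReal.div_pos (h.pos x (by linarith)).ne'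
    exact ENNReal.pow_ne_top ENNReal.ofReal_ne_top
  have hfin := Measure.finite_const_le_meas_of_disjoint_iUnion μ (ε := μ (ball x (R+ε)) / ENNReal.ofReal Cd ^ m)
    hpos (As := fun n => ball (f n) (ε/2)) (fun _ => measurableSet_ball) hdisj (by
      refine ne_top_of_le_ne_top (h.fin x (R+ε)).ne (measure_mono ?_)
      apply iUnion_subset
      intro n
      apply ball_subset_ball'
      have := hf n
      rw [mem_closedBall] at this
      linarith)
  apply infinite_univ (α := ℕ)
  refine hfin.subset (fun n _ => key n)

theorem Doubling.locFin {μ : Measure X} {Cd : ℝ} (h : Doubling μ Cd) : IsLocallyFiniteMeasure μ :=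
  ⟨fun x => ⟨ball x 1, ball_mem_nhds _ one_pos, h.fin x 1⟩⟩

theorem Doubling.unif {μ : Measure X} {Cd : ℝ} (h : Doubling μ Cd) : IsUnifLocDoublingMeasure μ := by
  refine ⟨⟨(Cd ^ 2).toNNReal, ?_⟩⟩
  filter_upwards [self_mem_nhdsWithin] with r hr x
  have hr : 0 < r := hr
  have := h.le_pow x hr 2
  have hC : 0 ≤ Cd := by linarith [h.1]
  calc μ (closedBall x (2*r)) ≤ μ (ball x (2^2*r)) := measure_mono (closedBall_subset_ball (by linarith))
    _ ≤ _ := this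
    _ ≤ _ := by
      rw [← ENNReal.ofReal_pow hC]
      gcongr
      · exact le_rfl
      · exact ball_subset_closedBall

/-- Lipschitz approximation from below -/
def GK (g : X → ℝ≥0∞) (k : ℕ) (x : X) : ℝ≥0∞ :=
  ⨅ y, min (g y) ((k:ℝ≥0∞)+1) + ((k:ℝ≥0∞)+1) * edist x y

theorem GK_le (g : X → ℝ≥0∞) (k : ℕ) (x : X) : GK g k x ≤ g x := by
  refine (iInf_le _ x).trans ?_
  simp

theorem GK_le' (g : X → ℝ≥0∞) (k : ℕ) (x : X) : GK g k x ≤ (k:ℝ≥0∞)+1 := by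
  refine (iInf_le _ x).trans ?_
  simp

theorem GK_lt_top (g : X → ℝ≥0∞) (k : ℕ) (x : X) : GK g k x < ∞ :=
  (GK_le' g k x).trans_lt (by simp)

theorem one_le_GK {g : X → ℝ≥0∞} (hg : ∀ x, 1 ≤ g x) (k : ℕ) (x : X) : 1 ≤ GK g k x := by
  refine le_iInf fun y => ?_
  refine le_trans (le_min (hg y) ?_) le_self_add
  exact le_add_self

theorem GK_lip (g : X → ℝ≥0∞) (k : ℕ) (x y : X) :
    GK g k x ≤ GK g k y + ((k:ℝ≥0∞)+1) * edist x y := by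
  simp only [GK]
  rw [ENNReal.iInf_add]
  refine le_iInf fun z => (iInf_le _ z).trans ?_
  rw [add_assoc, ← mul_add]
  gcongr
  rw [add_comm]
  exact edist_triangle _ _ _

theorem GK_cont (g : X → ℝ≥0∞) (k : ℕ) : Continuous (GK g k) :=
  continuous_of_le_add_edist ((k:ℝ≥0∞)+1) (by simp) (GK_lip g k)

theorem GK_mono (g : X → ℝ≥0∞) {k m : ℕ} (h : k ≤ m) (x : X) : GK g k x ≤ GK g m x := by
  simp only [GK]
  gcongr

theorem GK_sup {g : X → ℝ≥0∞} (hg : LowerSemicontinuous g) (x : X) : ⨆ k, GK g k x = g x := by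
  apply le_antisymm (iSup_le fun k => GK_le g k x)
  refine le_of_forall_lt fun a ha => ?_
  obtain ⟨b, hab, hbx⟩ := exists_between ha
  refine lt_of_lt_of_le hab ?_
  obtain ⟨r, hr, hball⟩ := Metric.eventually_nhds_iff.1 (hg x b hbx)
  have hb : b ≠ ∞ := hbx.ne_top
  obtain ⟨n, hn⟩ := exists_nat_gt (max b.toReal (b.toReal / r))
  refine le_iSup_of_le n (le_iInf fun y => ?_)
  have h1 : b ≤ (n:ℝ≥0∞) + 1 := by
    rw [← ENNReal.ofReal_toReal hb]
    have : ENNReal.ofReal b.toReal ≤ ENNReal.ofReal n := ENNReal.ofReal_le_ofReal ((le_max_left _ _).trans hn.le)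
    rw [ENNReal.ofReal_natCast] at this
    exact this.trans le_self_add
  by_cases hy : dist y x < r
  · exact le_trans (le_min (hball hy).le h1) le_self_add
  · push Not at hy
    refine le_trans ?_ le_add_self
    have h2 : b.toReal ≤ n * r := by
      have := ((le_max_right b.toReal _).trans hn.le)
      rwa [div_le_iff₀ hr] at this
    rw [edist_dist, dist_comm]
    calc b = ENNReal.ofReal b.toReal := (ENNReal.ofReal_toReal hb).symm
      _ ≤ ENNReal.ofReal (n * dist y x) := by
        apply ENNReal.ofReal_le_ofReal
        refine h2.trans ?_
        gcongr
      _ = n * ENNReal.ofReal (dist y x) := by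
        rw [ENNReal.ofReal_mul (by positivity), ENNReal.ofReal_natCast]
      _ ≤ _ := by gcongr; exact le_self_add

/-- quasi curves -/
def QC (r : ℝ) (x : X) (l : ℝ) (γ : ℝ → X) : Prop :=
  0 ≤ l ∧ γ 0 = x ∧ (∀ t ∈ Icc 0 l, dist x (γ t) ≤ t) ∧
    ∀ s ∈ Icc 0 l, ∀ t ∈ Icc 0 l, dist (γ s) (γ t) ≤ |s - t| + r

/-- radius -/
def rk (k : ℕ) : ℝ := 1 / ((k:ℝ) + 1)

theorem rk_pos (k : ℕ) : 0 < rk k := by unfold rk; positivity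

/-- discrete cost -/
def VK (g f : X → ℝ≥0∞) (k : ℕ) (x : X) : ℝ≥0∞ :=
  ⨅ (l : ℝ) (γ : ℝ → X) (_ : QC (rk k) x l γ), f (γ l) + ∫⁻ t in Icc 0 l, GK g k (γ t)

theorem VK_le (g f : X → ℝ≥0∞) (k : ℕ) (x : X) : VK g f k x ≤ f x := by
  refine (iInf₂_le (0:ℝ) (fun _ => x)).trans ((iInf_le _ ?_).trans ?_)
  · refine ⟨le_rfl, rfl, fun t ht => by simpa using ht.1, fun s _ t _ => ?_⟩
    rw [dist_self]
    have := rk_pos k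
    positivity
  · simp

theorem VK_mono (g f : X → ℝ≥0∞) {k m : ℕ} (h : k ≤ m) (x : X) : VK g f k x ≤ VK g f m x := by
  simp only [VK]
  refine le_iInf₂ fun l γ => le_iInf fun hγ => ?_
  refine (iInf₂_le l γ).trans ((iInf_le _ ?_).trans ?_)
  · refine ⟨hγ.1, hγ.2.1, hγ.2.2.1, fun s hs t ht => (hγ.2.2.2 s hs t ht).trans ?_⟩
    have : rk m ≤ rk k := by unfold rk; gcongr
    linarith
  · gcongr with t
    exact GK_mono g h _

theorem VK_step (g f : X → ℝ≥0∞) (k : ℕ) (x y : X) (hxy : dist x y ≤ rk k) :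
    VK g f k x ≤ GK g k x * edist x y + VK g f k y := by
  have hr := rk_pos k
  rw [VK, VK]
  simp only [ENNReal.add_iInf]
  refine le_iInf₂ fun l γ => le_iInf fun hγ => ?_
  obtain ⟨hl, h0, h1, h2⟩ := hγ
  set d := dist x y with hd
  have hd0 : 0 ≤ d := dist_nonneg
  set γ' : ℝ → X := fun t => if t < d then x else γ (t - d) with hγ'
  have hx0 : γ' 0 = x := by
    simp only [hγ']
    split_ifs with h
    · rfl
    · have : d = 0 := le_antisymm (not_lt.1 h) hd0
      rw [this, sub_zero, h0]
      exact (dist_eq_zero.1 (hd ▸ this)).symm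
  have hdx : ∀ t ∈ Icc 0 (l + d), dist x (γ' t) ≤ t := by
    intro t ht
    simp only [hγ']
    split_ifs with h
    · simpa using ht.1
    · push Not at h
      have := h1 (t - d) ⟨by linarith, by linarith [ht.2]⟩
      linarith [dist_triangle x y (γ (t-d))]
  have key : ∀ s ∈ Icc 0 (l+d), ∀ t ∈ Icc 0 (l+d), s ≤ t → dist (γ' s) (γ' t) ≤ |s - t| + rk k := by
    intro s hs t ht hst
    by_cases hsd : s < d
    · have : γ' s = x := by simp only [hγ', if_pos hsd]
      rw [this]
      have h3 := hdx t ht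
      have : |s - t| = t - s := by rw [abs_sub_comm]; exact abs_of_nonneg (by linarith)
      rw [this]; linarith
    · have e1 : γ' s = γ (s-d) := by simp only [hγ', if_neg hsd]
      have e2 : γ' t = γ (t-d) := by simp only [hγ', if_neg (by linarith : ¬ t < d)]
      rw [e1, e2]
      push Not at hsd
      have := h2 (s-d) ⟨by linarith, by linarith [hs.2]⟩ (t-d) ⟨by linarith, by linarith [ht.2]⟩
      simpa using this
  refine (iInf₂_le (l+d) γ').trans ((iInf_le _ ?_).trans ?_)
  · refine ⟨by linarith, hx0, hdx, fun s hs t ht => ?_⟩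
    rcases le_total s t with h | h
    · exact key s hs t ht h
    · have := key t ht s hs h
      rwa [dist_comm, abs_sub_comm] at this
  · have e : γ' (l+d) = γ l := by
      simp only [hγ', if_neg (by linarith : ¬ l + d < d)]
      congr 1; ring
    rw [e]
    have hU : Icc 0 (l+d) = Ico 0 d ∪ Icc d (l+d) := by
      rw [Ico_union_Icc_eq_Icc hd0 (by linarith)]
    have hdis : Disjoint (Ico 0 d) (Icc d (l+d)) := by
      rw [Set.disjoint_left]; intro t h h'; exact absurd h.2 (not_lt.2 h'.1)
    rw [hU, lintegral_union measurableSet_Icc hdis]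
    have i1 : ∫⁻ t in Ico 0 d, GK g k (γ' t) = GK g k x * edist x y := by
      rw [setLIntegral_congr_fun (g := fun _ => GK g k x) measurableSet_Ico]
      · rw [setLIntegral_const, Real.volume_Ico, sub_zero, edist_dist]
      · intro t ht; simp only [hγ', if_pos ht.2]
    have i2 : ∫⁻ t in Icc d (l+d), GK g k (γ' t) = ∫⁻ t in Icc 0 l, GK g k (γ t) := by
      rw [← lintegral_indicator measurableSet_Icc, ← lintegral_indicator measurableSet_Icc]
      rw [← lintegral_add_right_eq_self (μ := volume) _ d]
      congr 1
      ext t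
      by_cases ht : t ∈ Icc 0 l
      · rw [indicator_of_mem ht, indicator_of_mem (show t + d ∈ Icc d (l+d) from ⟨by linarith [ht.1], by linarith [ht.2]⟩)]
        simp only [hγ', if_neg (by linarith [ht.1] : ¬ t + d < d)]
        congr 2; ring
      · rw [indicator_of_notMem ht, indicator_of_notMem]
        intro h
        exact ht ⟨by linarith [h.1], by linarith [h.2]⟩
    rw [i1, i2]
    exact le_of_eq (by ring)

theorem rk_tendsto : Tendsto rk atTop (𝓝 0) := tendsto_one_div_add_atTop_nhds_zero_nat

theorem VK_limit [ProperSpace X] {g f : X → ℝ≥0∞} (hg : LowerSemicontinuous g) (hg1 : ∀ x, 1 ≤ g x)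
    (hf : LowerSemicontinuous f) (x : X) {c : ℝ≥0∞} (hc : c ≠ ∞) (h : ∀ k, VK g f k x < c) :
    ∃ γ : Curve X, γ.toFun 0 = x ∧ f (γ.toFun γ.len) + γ.integral g ≤ c := by
  have h' : ∀ k, ∃ l, ∃ γ : ℝ → X, QC (rk k) x l γ ∧ f (γ l) + ∫⁻ t in Icc 0 l, GK g k (γ t) < c := by
    intro k
    have := h k
    simp only [VK, iInf_lt_iff] at this
    obtain ⟨l, γ, hq, hlt⟩ := this
    exact ⟨l, γ, hq, hlt⟩
  choose l γ hQ hlt using h'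
  set L := c.toReal with hL
  have hlL : ∀ k, l k ≤ L := by
    intro k
    have : ENNReal.ofReal (l k) ≤ c := by
      refine le_trans ?_ (hlt k).le
      refine le_trans ?_ le_add_self
      calc ENNReal.ofReal (l k) = ∫⁻ t in Icc 0 (l k), 1 := by simp
        _ ≤ _ := lintegral_mono fun t => one_le_GK hg1 k _
    exact (ENNReal.ofReal_le_iff_le_toReal hc).1 this
  have hl0 : ∀ k, 0 ≤ l k := fun k => (hQ k).1
  have hL0 : 0 ≤ L := (hl0 0).trans (hlL 0)
  set cl : ℕ → ℝ → ℝ := fun k t => max 0 (min t (l k)) with hcl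
  have hclm : ∀ k t, cl k t ∈ Icc 0 (l k) := fun k t =>
    ⟨le_max_left _ _, max_le (hl0 k) (min_le_right _ _)⟩
  have hcleq : ∀ k t, t ∈ Icc 0 (l k) → cl k t = t := by
    intro k t ht
    simp only [hcl, min_eq_left ht.2, max_eq_right ht.1]
  have hcll : ∀ k s t, |cl k s - cl k t| ≤ |s - t| := by
    intro k s t
    simp only [hcl]
    refine (abs_max_sub_max_le_max _ _ _ _).trans ?_
    rw [sub_self, abs_zero]
    refine max_le (abs_nonneg _) ?_
    refine (abs_min_sub_min_le_max _ _ _ _).trans ?_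
    simp
  set b : ℕ → ℝ → X := fun k t => γ k (cl k t) with hb
  have hbd : ∀ k s t, dist (b k s) (b k t) ≤ |s - t| + rk k := by
    intro k s t
    have := (hQ k).2.2.2 _ (hclm k s) _ (hclm k t)
    linarith [hcll k s t]
  have hbm : ∀ k t, b k t ∈ closedBall x L := by
    intro k t
    rw [mem_closedBall, dist_comm]
    exact ((hQ k).2.2.1 _ (hclm k t)).trans ((hclm k t).2.trans (hlL k))
  set U : Ultrafilter ℕ := hyperfilter ℕ with hU
  have hUat : (U : Filter ℕ) ≤ atTop := by
    rw [← Nat.cofinite_eq_atTop]; exact hyperfilter_le_cofinite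
  have hrU : Tendsto rk U (𝓝 0) := rk_tendsto.mono_left hUat
  have hβ : ∀ t, ∃ y, Tendsto (fun k => b k t) U (𝓝 y) := by
    intro t
    obtain ⟨y, _, hy⟩ := (isCompact_closedBall x L).ultrafilter_le_nhds (U.map fun k => b k t)
      (by rw [Filter.le_principal_iff, Ultrafilter.mem_coe, Ultrafilter.mem_map]; exact Filter.univ_mem' fun k => hbm k t)
    exact ⟨y, hy⟩
  choose β hβ using hβ
  obtain ⟨ℓ, hℓm, hℓ⟩ : ∃ y ∈ Icc 0 L, Tendsto l U (𝓝 y) := by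
    obtain ⟨y, hym, hy⟩ := (isCompact_Icc (a := (0:ℝ)) (b := L)).ultrafilter_le_nhds (U.map l)
      (by rw [Filter.le_principal_iff, Ultrafilter.mem_coe, Ultrafilter.mem_map]; exact Filter.univ_mem' fun k => ⟨hl0 k, hlL k⟩)
    exact ⟨y, hym, hy⟩
  have hβlip : ∀ s t, dist (β s) (β t) ≤ |s - t| := by
    intro s t
    have h1 : Tendsto (fun k => dist (b k s) (b k t)) U (𝓝 (dist (β s) (β t))) := (hβ s).dist (hβ t)
    have h2 : Tendsto (fun k => |s - t| + rk k) U (𝓝 (|s-t| + 0)) := tendsto_const_nhds.add hrU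
    rw [add_zero] at h2
    exact le_of_tendsto_of_tendsto' h1 h2 fun k => hbd k s t
  have hβL : LipschitzWith 1 β := LipschitzWith.of_dist_le_mul (by
    intro s t; simpa [Real.dist_eq] using hβlip s t)
  have hβ0 : β 0 = x := by
    refine tendsto_nhds_unique (hβ 0) ?_
    have : (fun k => b k 0) = fun k => x := by
      ext k
      simp only [hb]
      rw [hcleq k 0 ⟨le_rfl, hl0 k⟩]
      exact (hQ k).2.1
    rw [this]; exact tendsto_const_nhds
  have hend : ∀ k, b k L = γ k (l k) := by
    intro k
    simp only [hb, hcl, min_eq_right (hlL k), max_eq_right (hl0 k)]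
  have hβend : β ℓ = β L := by
    have h1 : Tendsto (fun k => dist (b k ℓ) (b k L)) U (𝓝 (dist (β ℓ) (β L))) := (hβ _).dist (hβ _)
    have h2 : Tendsto (fun k => |ℓ - l k| + rk k) U (𝓝 (|ℓ - ℓ| + 0)) :=
      ((tendsto_const_nhds.sub hℓ).abs).add hrU
    rw [sub_self, abs_zero, add_zero] at h2
    have := le_of_tendsto_of_tendsto' h1 h2 fun k => by
      rw [hend]
      have h3 := (hQ k).2.2.2 _ (hclm k ℓ) (l k) ⟨hl0 k, le_rfl⟩
      have h4 : |cl k ℓ - l k| ≤ |ℓ - l k| := by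
        have := hcll k ℓ (l k)
        rwa [hcleq k (l k) ⟨hl0 k, le_rfl⟩] at this
      simp only [hb]
      linarith
    exact dist_le_zero.1 this
  -- uniform convergence
  have hunif : ∀ e > 0, ∀ᶠ k in (U : Filter ℕ), ∀ t ∈ Icc 0 L, dist (b k t) (β t) ≤ 4 * e := by
    intro e he
    obtain ⟨s, hs, hsf, hcov⟩ := (isCompact_Icc (a := (0:ℝ)) (b := L)).finite_cover_balls he
    have h1 : ∀ᶠ k in (U : Filter ℕ), ∀ y ∈ s, dist (b k y) (β y) < e :=
      (eventually_all_finite hsf).2 fun y _ => (hβ y).eventually (ball_mem_nhds _ he)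
    have h2 : ∀ᶠ k in (U : Filter ℕ), rk k < e := hrU.eventually (gt_mem_nhds he)
    filter_upwards [h1, h2] with k h1 h2 t ht
    obtain ⟨y, hy, hty⟩ := mem_iUnion₂.1 (hcov ht)
    rw [mem_ball, Real.dist_eq] at hty
    have a1 := hbd k t y
    have a2 := h1 y hy
    have a3 := hβlip y t
    rw [abs_sub_comm] at a3
    linarith [dist_triangle (b k t) (b k y) (β t), dist_triangle (b k y) (β y) (β t)]
  have hmain : ∀ m : ℕ, ∀ a, (a < f (β ℓ) ∨ a = 0) → a + ∫⁻ t in Icc 0 ℓ, GK g m (β t) ≤ c := by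
    intro m a ha
    apply ENNReal.le_of_forall_pos_le_add
    intro ε hε _
    set D : ℝ := ((m:ℝ)+1) * (4 * L + 1) with hD
    have hDpos : 0 < D := by positivity
    set e : ℝ := ε / D with he
    have hepos : 0 < e := div_pos hε hDpos
    have ha' : ∀ᶠ k in (U : Filter ℕ), a ≤ f (γ k (l k)) := by
      rcases ha with ha | ha
      · rw [hβend] at ha
        have := (hβ L).eventually (hf (β L) a ha)
        filter_upwards [this] with k hk
        rw [← hend]; exact hk.le
      · subst ha; exact Eventually.of_forall fun _ => zero_le
    have hle : ∀ᶠ k in (U : Filter ℕ), ℓ - e < l k := hℓ.eventually (lt_mem_nhds (by linarith))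
    have hkm : ∀ᶠ k in (U : Filter ℕ), m ≤ k := hUat (eventually_ge_atTop m)
    obtain ⟨k, hk1, hk2, hk3, hk4⟩ := (ha'.and (hle.and (hkm.and (hunif e hepos)))).exists
    have i1 : ∫⁻ t in Icc 0 ℓ, GK g m (β t) ≤
        (∫⁻ t in Icc 0 (l k), GK g m (β t)) + ∫⁻ t in Icc (ℓ - e) ℓ, GK g m (β t) := by
      refine le_trans (lintegral_mono_set (t := Icc 0 (l k) ∪ Icc (ℓ - e) ℓ) ?_) (lintegral_union_le _ _ _)
      intro t ht
      by_cases h : t ≤ l k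
      · exact Or.inl ⟨ht.1, h⟩
      · exact Or.inr ⟨by linarith, ht.2⟩
    have i2 : ∫⁻ t in Icc (ℓ - e) ℓ, GK g m (β t) ≤ ENNReal.ofReal ((m+1) * e) := by
      calc _ ≤ ∫⁻ t in Icc (ℓ - e) ℓ, ((m:ℝ≥0∞)+1) := lintegral_mono fun t => GK_le' g m _
        _ = ((m:ℝ≥0∞)+1) * ENNReal.ofReal e := by
          rw [setLIntegral_const, Real.volume_Icc]; congr 2; ring
        _ = _ := by
          rw [ENNReal.ofReal_mul (by positivity), ENNReal.ofReal_add (by positivity) zero_le_one]; simp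
    have i3 : ∫⁻ t in Icc 0 (l k), GK g m (β t) ≤
        (∫⁻ t in Icc 0 (l k), GK g k (γ k t)) + ENNReal.ofReal ((m+1) * (4*e*L)) := by
      calc _ ≤ ∫⁻ t in Icc 0 (l k), (GK g k (γ k t) + ((m:ℝ≥0∞)+1) * ENNReal.ofReal (4*e)) := by
            apply setLIntegral_mono' measurableSet_Icc
            intro t ht
            refine (GK_lip g m (β t) (γ k t)).trans ?_
            have h4 := hk4 t ⟨ht.1, ht.2.trans (hlL k)⟩
            have : b k t = γ k t := by simp only [hb]; rw [hcleq k t ht]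
            rw [this] at h4
            gcongr
            · exact GK_mono g hk3 _
            · rw [edist_dist, dist_comm]
              exact ENNReal.ofReal_le_ofReal h4
        _ = (∫⁻ t in Icc 0 (l k), GK g k (γ k t)) + ((m:ℝ≥0∞)+1) * ENNReal.ofReal (4*e) * ENNReal.ofReal (l k) := by
            rw [lintegral_add_right _ measurable_const, setLIntegral_const, Real.volume_Icc, sub_zero]
        _ ≤ _ := by
            gcongr
            rw [mul_assoc, ENNReal.ofReal_mul (by positivity : (0:ℝ) ≤ (m:ℝ)+1), ENNReal.ofReal_add (by positivity) zero_le_one,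
              ENNReal.ofReal_mul (p := 4 * e) (by positivity)]
            simp only [ENNReal.ofReal_natCast, ENNReal.ofReal_one]
            gcongr
            exact hlL k
    have hsum : ENNReal.ofReal ((m+1) * (4*e*L)) + ENNReal.ofReal ((m+1) * e) = ε := by
      rw [← ENNReal.ofReal_add (by positivity) (by positivity)]
      have : ((m:ℝ)+1) * (4*e*L) + (m+1) * e = ε := by
        have : e * D = ε := div_mul_cancel₀ _ hDpos.ne'
        rw [← this, hD]; ring
      rw [this]; simp
    calc a + ∫⁻ t in Icc 0 ℓ, GK g m (β t)
        ≤ f (γ k (l k)) + (((∫⁻ t in Icc 0 (l k), GK g k (γ k t)) + ENNReal.ofReal ((m+1) * (4*e*L)))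
            + ENNReal.ofReal ((m+1) * e)) := by
          gcongr
          exact i1.trans (add_le_add i3 i2)
      _ = (f (γ k (l k)) + ∫⁻ t in Icc 0 (l k), GK g k (γ k t)) + ε := by
          rw [← hsum]; ring
      _ ≤ c + ε := by gcongr; exact (hlt k).le
  have hmain2 : ∀ a, (a < f (β ℓ) ∨ a = 0) → a + ∫⁻ t in Icc 0 ℓ, g (β t) ≤ c := by
    intro a ha
    have : ∫⁻ t in Icc 0 ℓ, g (β t) = ⨆ m, ∫⁻ t in Icc 0 ℓ, GK g m (β t) := by
      rw [← lintegral_iSup]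
      · simp only [GK_sup hg]
      · intro m; exact ((GK_cont g m).comp hβL.continuous).measurable
      · intro m n hmn t; exact GK_mono g hmn _
    rw [this, ENNReal.add_iSup]
    exact iSup_le fun m => hmain m a ha
  refine ⟨⟨ℓ, hℓm.1, β, hβL.lipschitzOnWith⟩, hβ0, ?_⟩
  simp only [Curve.integral]
  have hI := hmain2 0 (Or.inr rfl)
  rw [zero_add] at hI
  have : f (β ℓ) ≤ c - ∫⁻ t in Icc 0 ℓ, g (β t) := by
    refine le_of_forall_lt_imp_le_of_dense fun a ha => ?_
    exact ENNReal.le_sub_of_add_le_right (ne_top_of_le_ne_top hc hI) (hmain2 a (Or.inl ha))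
  calc _ ≤ (c - ∫⁻ t in Icc 0 ℓ, g (β t)) + ∫⁻ t in Icc 0 ℓ, g (β t) := by gcongr
    _ = c := tsub_add_cancel_of_le hI

theorem curve_deriv_bound {h : X → ℝ} {G : X → ℝ≥0∞} {r : ℝ} (hr : 0 < r) (hG : ∀ x, G x ≠ ∞)
    (H : ∀ x y, dist x y ≤ r → h x - h y ≤ (G x).toReal * dist x y) (γ : Curve X) :
    ∀ᵐ t ∂(volume.restrict (Icc (0:ℝ) γ.len)),
      ENNReal.ofReal |deriv (fun t => h (γ.toFun t)) t| ≤ G (γ.toFun t) := by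
  rw [← restrict_Ioo_eq_restrict_Icc, ae_restrict_iff' measurableSet_Ioo]
  refine Eventually.of_forall fun t ht => ?_
  rw [ENNReal.ofReal_le_iff_le_toReal (hG _)]
  refine deriv_bound_one ENNReal.toReal_nonneg ?_
  have h1 : ∀ᶠ s in 𝓝 t, s ∈ Icc 0 γ.len := Icc_mem_nhds ht.1 ht.2
  have h2 : ∀ᶠ s in 𝓝 t, s ∈ ball t r := ball_mem_nhds t hr
  filter_upwards [h1, h2] with s h1 h2
  have h3 := γ.lip.dist_le_mul t (Ioo_subset_Icc_self ht) s h1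
  rw [NNReal.coe_one, one_mul, dist_comm t s, Real.dist_eq] at h3
  rw [mem_ball, Real.dist_eq] at h2
  refine (H _ _ (h3.trans h2.le)).trans ?_
  gcongr

/-- truncated cost -/
def TK (g f : X → ℝ≥0∞) (k : ℕ) (x : X) : ℝ := (min (VK g f k x) 1).toReal

theorem TK_nonneg (g f : X → ℝ≥0∞) (k : ℕ) (x : X) : 0 ≤ TK g f k x := ENNReal.toReal_nonneg

theorem TK_le_one (g f : X → ℝ≥0∞) (k : ℕ) (x : X) : TK g f k x ≤ 1 := by
  have : min (VK g f k x) 1 ≤ 1 := min_le_right _ _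
  simpa [TK] using ENNReal.toReal_mono ENNReal.one_ne_top this

theorem TK_lt (g f : X → ℝ≥0∞) (k : ℕ) (x : X) {c : ℝ} (hc : c ≤ 1) (h : TK g f k x < c) :
    VK g f k x < ENNReal.ofReal c := by
  have h1 : min (VK g f k x) 1 < ENNReal.ofReal c := by
    rw [ENNReal.lt_ofReal_iff_toReal_lt (by simp)]; exact h
  rcases min_lt_iff.1 h1 with h2 | h2
  · exact h2
  · exfalso
    have : ENNReal.ofReal c ≤ 1 := by simpa using hc
    exact absurd h2 (not_lt.2 this)

theorem TK_le_of (g f : X → ℝ≥0∞) (k : ℕ) (x : X) : ENNReal.ofReal (TK g f k x) ≤ f x := by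
  rw [TK, ENNReal.ofReal_toReal (by simp)]
  exact (min_le_left _ _).trans (VK_le g f k x)

theorem TK_mono (g f : X → ℝ≥0∞) {k m : ℕ} (h : k ≤ m) (x : X) : TK g f k x ≤ TK g f m x := by
  apply ENNReal.toReal_mono (by simp)
  exact min_le_min_right _ (VK_mono g f h x)

theorem TK_step (g f : X → ℝ≥0∞) (k : ℕ) (x y : X) (hxy : dist x y ≤ rk k) :
    TK g f k x - TK g f k y ≤ (GK g k x).toReal * dist x y := by
  have h1 := VK_step g f k x y hxy
  have h2 : min (VK g f k x) 1 ≤ GK g k x * edist x y + min (VK g f k y) 1 := by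
    rcases le_total (VK g f k y) 1 with h | h
    · rw [min_eq_left h]; exact (min_le_left _ _).trans h1
    · rw [min_eq_right h]; exact (min_le_right _ _).trans le_add_self
  have hne : GK g k x * edist x y ≠ ∞ := ENNReal.mul_ne_top (GK_lt_top g k x).ne (edist_ne_top _ _)
  have h3 := ENNReal.toReal_mono (ENNReal.add_ne_top.2 ⟨hne, by simp⟩) h2
  rw [ENNReal.toReal_add hne (by simp), ENNReal.toReal_mul, edist_dist, ENNReal.toReal_ofReal dist_nonneg] at h3
  simp only [TK]
  linarith

theorem TK_lip (g f : X → ℝ≥0∞) (k : ℕ) : LipschitzWith (k+1) (TK g f k) := by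
  apply LipschitzWith.of_dist_le_mul
  have key : ∀ x y, TK g f k x - TK g f k y ≤ ((k:ℝ)+1) * dist x y := by
    intro x y
    rcases le_or_gt (dist x y) (rk k) with h | h
    · refine (TK_step g f k x y h).trans ?_
      gcongr
      have := ENNReal.toReal_mono (by simp) (GK_le' g k x)
      rw [ENNReal.toReal_add (by simp) (by simp)] at this
      simpa using this
    · have h1 := TK_nonneg g f k y
      have h2 := TK_le_one g f k x
      have h3 : 1 ≤ ((k:ℝ)+1) * dist x y := by
        unfold rk at h
        rw [div_lt_iff₀ (by positivity)] at h
        linarith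
      linarith
  intro x y
  rw [Real.dist_eq, abs_le]
  have h1 := key x y
  have h2 := key y x
  rw [dist_comm] at h2
  push_cast
  constructor <;> linarith

theorem lip_ug {h : X → ℝ} {K : ℝ≥0} (hK : LipschitzWith K h) {G : X → ℝ≥0∞} {γ : Curve X}
    (H : ∀ᵐ t ∂(volume.restrict (Icc (0:ℝ) γ.len)),
      ENNReal.ofReal |deriv (fun t => h (γ.toFun t)) t| ≤ G (γ.toFun t)) : UGIneq h G γ :=
  ftc_le γ.len_nonneg (K := K * 1) (hK.comp_lipschitzOnWith γ.lip) H

theorem TK_ug (g f : X → ℝ≥0∞) (k : ℕ) : IsUpperGradient (TK g f k) (GK g k) :=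
  ⟨(GK_cont g k).measurable, fun γ => lip_ug (TK_lip g f k)
    (curve_deriv_bound (rk_pos k) (fun x => (GK_lt_top g k x).ne) (fun x y => TK_step g f k x y) γ)⟩

theorem avg_sub_le {μ : Measure X} {S : Set X} (h0 : μ S ≠ 0) (ht : μ S ≠ ∞) {u : X → ℝ}
    (hu : IntegrableOn u S μ) (c : ℝ) :
    |(⨍ y in S, u y ∂μ) - c| ≤ (μ.real S)⁻¹ * ∫ y in S, |u y - c| ∂μ := by
  have hpos : 0 < μ.real S := ENNReal.toReal_pos h0 ht
  have hc : IntegrableOn (fun _ : X => c) S μ := integrableOn_const ht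
  have : (⨍ y in S, u y ∂μ) - c = (μ.real S)⁻¹ * ∫ y in S, (u y - c) ∂μ := by
    rw [setAverage_eq, integral_sub hu hc, setIntegral_const, smul_eq_mul, smul_eq_mul, mul_sub,
      inv_mul_cancel_left₀ hpos.ne']
  rw [this, abs_mul, abs_of_pos (inv_pos.2 hpos)]
  gcongr
  exact abs_integral_le_integral_abs

theorem avg_step {μ : Measure X} {Cd CP lam : ℝ} (hD : Doubling μ Cd) (hP : Poincare μ CP lam)
    {u : X → ℝ} {K : ℝ≥0} (hu : LipschitzWith K u) (hub : ∀ x, |u x| ≤ 1) {G g : X → ℝ≥0∞}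
    (hG : IsUpperGradient u G) (hGg : ∀ x, G x ≤ g x) {x y : X} {r s D m : ℝ} (hr : 0 < r) (hs : 0 < s)
    (hm : 0 ≤ m) (hD0 : 0 ≤ D)
    (hsub : ball y s ⊆ ball x r) (hDD : μ (ball x r) ≤ ENNReal.ofReal D * μ (ball y s))
    (hg : ∫⁻ z in ball x (lam * r), g z ∂μ ≤ ENNReal.ofReal m * μ (ball x (lam * r))) :
    |(⨍ z in ball y s, u z ∂μ) - ⨍ z in ball x r, u z ∂μ| ≤ D * (CP * r * m) := by
  have hint : ∀ z t, IntegrableOn u (ball z t) μ := by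
    intro z t
    refine Measure.integrableOn_of_bounded (M := 1) (hD.fin z t).ne hu.continuous.aestronglyMeasurable ?_
    exact Eventually.of_forall fun a => by simpa using hub a
  set c := ⨍ z in ball x r, u z ∂μ with hc
  have h1 := avg_sub_le (hD.pos y hs).ne' (hD.fin y s).ne (hint y s) c
  have hint2 : IntegrableOn (fun z => |u z - c|) (ball x r) μ :=
    ((hint x r).sub (integrableOn_const (hD.fin x r).ne)).abs
  have h2 : ∫ z in ball y s, |u z - c| ∂μ ≤ ∫ z in ball x r, |u z - c| ∂μ := by
    apply setIntegral_mono_set hint2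
    · exact Eventually.of_forall fun z => abs_nonneg _
    · exact hsub.eventuallyLE
  have hpx : 0 < μ.real (ball x r) := ENNReal.toReal_pos (hD.pos x hr).ne' (hD.fin x r).ne
  have hpy : 0 < μ.real (ball y s) := ENNReal.toReal_pos (hD.pos y hs).ne' (hD.fin y s).ne
  have hDr : μ.real (ball x r) ≤ D * μ.real (ball y s) := by
    have := ENNReal.toReal_mono (ENNReal.mul_ne_top ENNReal.ofReal_ne_top (hD.fin y s).ne) hDD
    rwa [ENNReal.toReal_mul, ENNReal.toReal_ofReal hD0] at this
  have hlr : 0 < lam * r := mul_pos (by linarith [hP.2.1]) hr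
  have h3 := hP.2.2 x r hr u G ⟨hu.continuous.aemeasurable, fun z _ => ⟨1, one_pos, by
    refine lt_of_le_of_lt (lintegral_mono (g := fun _ => 1) fun a => ?_) ?_
    · simpa using hub a
    · rw [univ_inter, setLIntegral_const, one_mul]; exact hD.fin z 1⟩⟩ hG
  have h4 : (∫⁻ y in Metric.ball x (lam * r), G y ∂μ) / μ (Metric.ball x (lam * r)) ≤ ENNReal.ofReal m := by
    apply ENNReal.div_le_of_le_mul
    exact (lintegral_mono hGg).trans hg
  have h5 : (⨍ z in ball x r, |u z - c| ∂μ) ≤ CP * r * m := by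
    have hCr : 0 ≤ CP * r := mul_nonneg (by linarith [hP.1]) hr.le
    have : ENNReal.ofReal (⨍ z in ball x r, |u z - c| ∂μ) ≤ ENNReal.ofReal (CP * r * m) := by
      rw [ENNReal.ofReal_mul hCr]
      exact h3.trans (by gcongr)
    exact (ENNReal.ofReal_le_ofReal_iff (by positivity)).1 this
  rw [setAverage_eq, smul_eq_mul] at h5
  have hI0 : 0 ≤ ∫ z in ball x r, |u z - c| ∂μ := integral_nonneg fun z => abs_nonneg _
  calc _ ≤ (μ.real (ball y s))⁻¹ * ∫ z in ball x r, |u z - c| ∂μ := h1.trans (by gcongr)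
    _ ≤ (D * (μ.real (ball x r))⁻¹) * ∫ z in ball x r, |u z - c| ∂μ := by
      gcongr
      rw [← div_eq_mul_inv, le_div_iff₀ hpx, inv_mul_le_iff₀ hpy, mul_comm]
      exact hDr
    _ ≤ _ := by rw [mul_assoc]; gcongr

theorem avg_chain {μ : Measure X} {Cd CP lam : ℝ} (hD : Doubling μ Cd) (hP : Poincare μ CP lam)
    {u : X → ℝ} {K : ℝ≥0} (hu : LipschitzWith K u) (hub : ∀ x, |u x| ≤ 1) {G g : X → ℝ≥0∞}
    (hG : IsUpperGradient u G) (hGg : ∀ x, G x ≤ g x) {x : X} {ρ R m : ℝ} (hρ : 0 < ρ)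
    (hm : 0 ≤ m) (hR : lam * ρ ≤ R)
    (hg : ∀ r, 0 < r → r ≤ R → ∫⁻ z in ball x r, g z ∂μ ≤ ENNReal.ofReal m * μ (ball x r)) :
    |(⨍ z in ball x ρ, u z ∂μ) - u x| ≤ 2 * Cd * CP * ρ * m := by
  set a : ℕ → ℝ := fun n => ⨍ z in ball x (ρ / 2 ^ n), u z ∂μ with ha
  have hl : 1 ≤ lam := hP.2.1
  have hrpos : ∀ n : ℕ, 0 < ρ / 2 ^ n := fun n => by positivity
  have hstep : ∀ n, dist (a n) (a (n+1)) ≤ (2 * Cd * CP * ρ * m) / 2 / 2 ^ n := by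
    intro n
    rw [dist_comm, Real.dist_eq]
    have e : ρ / 2 ^ n = 2 * (ρ / 2 ^ (n+1)) := by rw [pow_succ]; field_simp
    have hle : ρ / 2^n ≤ ρ := div_le_self hρ.le (one_le_pow₀ one_le_two)
    have := avg_step hD hP hu hub hG hGg (x := x) (y := x) (r := ρ / 2^n) (s := ρ / 2^(n+1)) (D := Cd) (m := m)
      (hrpos n) (hrpos (n+1)) hm (by linarith [hD.1])
      (ball_subset_ball (by rw [e]; linarith [hrpos (n+1)]))
      (by rw [e]; exact (hD.2 x _ (hrpos (n+1))).2.1)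
      (hg _ (mul_pos (by linarith) (hrpos n)) (le_trans (by gcongr) hR))
    refine this.trans (le_of_eq ?_)
    field_simp
  have hlim : Tendsto a atTop (𝓝 (u x)) := by
    rw [tendsto_iff_dist_tendsto_zero]
    have ht : Tendsto (fun n : ℕ => (K:ℝ) * (ρ / 2^n)) atTop (𝓝 0) := by
      have : Tendsto (fun n : ℕ => ((K:ℝ) * ρ) * (1/2)^n) atTop (𝓝 ((K * ρ) * 0)) :=
        (tendsto_pow_atTop_nhds_zero_of_lt_one (by norm_num) (by norm_num)).const_mul _
      rw [mul_zero] at this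
      refine this.congr fun n => ?_
      rw [one_div, inv_pow]; ring
    refine squeeze_zero (fun _ => dist_nonneg) (fun n => ?_) ht
    rw [Real.dist_eq]
    have hint : ∀ z t, IntegrableOn u (ball z t) μ := by
      intro z t
      refine Measure.integrableOn_of_bounded (M := 1) (hD.fin z t).ne hu.continuous.aestronglyMeasurable ?_
      exact Eventually.of_forall fun a => by simpa using hub a
    have hpy : 0 < μ.real (ball x (ρ/2^n)) := ENNReal.toReal_pos (hD.pos x (hrpos n)).ne' (hD.fin x _).ne
    refine (avg_sub_le (hD.pos x (hrpos n)).ne' (hD.fin x _).ne (hint x _) (u x)).trans ?_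
    rw [inv_mul_le_iff₀ hpy]
    have : ∫ y in ball x (ρ / 2^n), |u y - u x| ∂μ ≤ ∫ y in ball x (ρ/2^n), (K:ℝ) * (ρ/2^n) ∂μ := by
      apply setIntegral_mono_on
      · exact ((hint x _).sub (integrableOn_const (hD.fin x _).ne)).abs
      · exact integrableOn_const (hD.fin x _).ne
      · exact measurableSet_ball
      · intro y hy
        rw [← Real.dist_eq]
        refine (hu.dist_le_mul y x).trans ?_
        gcongr
        exact (mem_ball.1 hy).le
    rw [setIntegral_const, smul_eq_mul] at this
    exact this
  have := dist_le_of_le_geometric_two_of_tendsto₀ hstep hlim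
  simpa [ha, Real.dist_eq] using this

theorem pointwise_est {μ : Measure X} {Cd CP lam : ℝ} (hD : Doubling μ Cd) (hP : Poincare μ CP lam)
    {u : X → ℝ} {K : ℝ≥0} (hu : LipschitzWith K u) (hub : ∀ x, |u x| ≤ 1) {G g : X → ℝ≥0∞}
    (hG : IsUpperGradient u G) (hGg : ∀ x, G x ≤ g x) {x y : X} {R m : ℝ} (hxy : x ≠ y)
    (hm : 0 ≤ m) (hR : lam * (2 * dist x y) ≤ R)
    (hgx : ∀ r, 0 < r → r ≤ R → ∫⁻ z in ball x r, g z ∂μ ≤ ENNReal.ofReal m * μ (ball x r))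
    (hgy : ∀ r, 0 < r → r ≤ R → ∫⁻ z in ball y r, g z ∂μ ≤ ENNReal.ofReal m * μ (ball y r)) :
    |u x - u y| ≤ (6 * Cd + 2 * Cd ^ 2) * CP * m * dist x y := by
  set d := dist x y with hd
  have hd0 : 0 < d := dist_pos.2 hxy
  have hl : 1 ≤ lam := hP.2.1
  have h1 := avg_chain hD hP hu hub hG hGg (x := x) (ρ := 2 * d) (by positivity) hm hR hgx
  have h2 := avg_chain hD hP hu hub hG hGg (x := y) (ρ := d) hd0 hm (le_trans (by nlinarith) hR) hgy
  have h3 := avg_step hD hP hu hub hG hGg (x := x) (y := y) (r := 2 * d) (s := d) (D := Cd ^ 2) (m := m)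
      (by positivity) hd0 hm (by positivity)
      (ball_subset_ball' (by rw [dist_comm, ← hd]; linarith))
      (by
        rw [ENNReal.ofReal_pow (by linarith [hD.1])]
        refine le_trans (measure_mono ?_) (hD.le_pow y hd0 2)
        apply ball_subset_ball'
        rw [← hd]; linarith)
      (hgx _ (by positivity) hR)
  rw [abs_le] at *
  constructor <;> nlinarith [h1.1, h1.2, h2.1, h2.2, h3.1, h3.2]

/-- good sets -/
def SM (μ : Measure X) (g : X → ℝ≥0∞) (m : ℕ) : Set X :=
  {x | ∀ r, 0 < r → r ≤ 1 / ((m:ℝ)+1) → ∫⁻ z in ball x r, g z ∂μ ≤ ENNReal.ofReal m * μ (ball x r)}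

theorem SM_mono (μ : Measure X) (g : X → ℝ≥0∞) {m n : ℕ} (h : m ≤ n) : SM μ g m ⊆ SM μ g n := by
  intro x hx r hr hrn
  refine (hx r hr (hrn.trans (by gcongr))).trans ?_
  gcongr

theorem SM_ae [ProperSpace X] {μ : Measure X} {Cd : ℝ} (hD : Doubling μ Cd) {g : X → ℝ≥0∞}
    (hg : Measurable g) (hgi : ∫⁻ x, g x ∂μ ≠ ∞) : ∀ᵐ x ∂μ, ∃ m, x ∈ SM μ g m := by
  have := hD.locFin
  have := hD.unif
  have h1 := (IsUnifLocDoublingMeasure.vitaliFamily μ 1).ae_tendsto_lintegral_div hg.aemeasurable hgi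
  filter_upwards [h1, ae_lt_top hg hgi] with x hx hxt
  have ht : Tendsto (fun r : ℝ => closedBall x r) (𝓝[>] 0)
      ((IsUnifLocDoublingMeasure.vitaliFamily μ 1).filterAt x) := by
    apply IsUnifLocDoublingMeasure.tendsto_closedBall_filterAt μ (K := 1) (fun _ => x) (fun r => r) tendsto_id
    filter_upwards [self_mem_nhdsWithin] with r hr
    have : 0 < r := hr
    simp [this.le]
  have h2 := hx.comp ht
  have h3 : ∀ᶠ r in 𝓝[>] (0:ℝ), (∫⁻ y in closedBall x r, g y ∂μ) / μ (closedBall x r) < g x + 1 :=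
    h2.eventually (gt_mem_nhds (ENNReal.lt_add_right hxt.ne one_ne_zero))
  obtain ⟨R, hR, hRR⟩ := (mem_nhdsGT_iff_exists_Ioc_subset).1 h3
  have hR : 0 < R := hR
  set c : ℝ := (g x + 1).toReal * Cd with hc
  obtain ⟨n, hn⟩ := exists_nat_gt (max c (1 / R))
  have hn1 : c ≤ n := (le_max_left _ _).trans hn.le
  have hn2 : 1 / R ≤ n := (le_max_right _ _).trans hn.le
  refine ⟨n, fun r hr hrn => ?_⟩
  have hrR : r ≤ R := by
    refine hrn.trans ?_
    rw [div_le_iff₀ (by positivity)]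
    rw [div_le_iff₀ hR] at hn2
    nlinarith
  have h4 : (∫⁻ y in closedBall x r, g y ∂μ) / μ (closedBall x r) < g x + 1 := hRR ⟨hr, hrR⟩
  have hcb0 : μ (closedBall x r) ≠ 0 := ((hD.pos x hr).trans_le (measure_mono ball_subset_closedBall)).ne'
  have hcbt : μ (closedBall x r) ≠ ∞ :=
    ((measure_mono (closedBall_subset_ball (by linarith : r < 2 * r))).trans_lt (hD.fin x _)).ne
  have h5 : (∫⁻ y in closedBall x r, g y ∂μ) ≤ (g x + 1) * μ (closedBall x r) :=
    (ENNReal.div_le_iff hcb0 hcbt).1 h4.le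
  have hgx : g x + 1 ≠ ∞ := by simp [hxt.ne]
  calc ∫⁻ z in ball x r, g z ∂μ ≤ ∫⁻ z in closedBall x r, g z ∂μ := lintegral_mono_set ball_subset_closedBall
    _ ≤ _ := h5
    _ ≤ (g x + 1) * μ (ball x (2*r)) := by gcongr; exact closedBall_subset_ball (by linarith)
    _ ≤ (g x + 1) * (ENNReal.ofReal Cd * μ (ball x r)) := by gcongr; exact (hD.2 x r hr).2.1
    _ = ENNReal.ofReal c * μ (ball x r) := by
      rw [hc, ENNReal.ofReal_mul ENNReal.toReal_nonneg, ENNReal.ofReal_toReal hgx, mul_assoc]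
    _ ≤ _ := by gcongr

theorem SM_lip [ProperSpace X] {μ : Measure X} {Cd CP lam : ℝ} (hD : Doubling μ Cd) (hP : Poincare μ CP lam)
    {w : X → ℝ} (hw0 : ∀ x, 0 ≤ w x) (hw1 : ∀ x, w x ≤ 1) {g : X → ℝ≥0∞} (hg : LowerSemicontinuous g)
    (hug : ∀ γ : Curve X, UGIneq w g γ) (m : ℕ) :
    ∃ L : ℝ≥0, LipschitzOnWith L w (SM μ g m) := by
  have hl : 1 ≤ lam := hP.2.1
  have hCP : 1 ≤ CP := hP.1
  have hCd : 1 ≤ Cd := hD.1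
  set C : ℝ := (6 * Cd + 2 * Cd ^ 2) * CP * ((m:ℝ)+1) with hC
  have hC0 : 0 < C := by positivity
  set L : ℝ := 2 * C + 2 * lam * (m+1) with hL
  have hL0 : 0 ≤ L := by positivity
  refine ⟨⟨L, hL0⟩, LipschitzOnWith.of_dist_le_mul ?_⟩
  intro x hx y hy
  rw [Real.dist_eq]
  change |w x - w y| ≤ L * dist x y
  rcases eq_or_ne x y with rfl | hxy
  · simp
  set d := dist x y with hd
  have hd0 : 0 < d := dist_pos.2 hxy
  have hw : |w x - w y| ≤ 1 := by
    rw [abs_le]; constructor <;> linarith [hw0 x, hw0 y, hw1 x, hw1 y]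
  by_cases hbig : 1 / ((m:ℝ)+1) < lam * (2 * d)
  · rw [div_lt_iff₀ (by positivity)] at hbig
    have : 0 < C * d := by positivity
    rw [hL]; nlinarith
  push Not at hbig
  by_cases hbig2 : 1 < 2 * C * d
  · have : 0 ≤ 2 * lam * (m+1) * d := by positivity
    rw [hL]; nlinarith
  push Not at hbig2
  set g1 : X → ℝ≥0∞ := fun z => g z + 1 with hg1
  have hg1l : LowerSemicontinuous g1 := hg.add lowerSemicontinuous_const
  have hg11 : ∀ z, 1 ≤ g1 z := fun z => le_add_self
  set f : X → ℝ≥0∞ := ({y}ᶜ : Set X).indicator (fun _ => ∞) with hf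
  have hfl : LowerSemicontinuous f := isOpen_compl_singleton.lowerSemicontinuous_indicator zero_le
  have hbound : ∀ z ∈ SM μ g m, ∀ r, 0 < r → r ≤ 1 / ((m:ℝ)+1) →
      ∫⁻ z' in ball z r, g1 z' ∂μ ≤ ENNReal.ofReal (m+1) * μ (ball z r) := by
    intro z hz r hr hrm
    rw [hg1, lintegral_add_right _ measurable_const, setLIntegral_const, one_mul,
      ENNReal.ofReal_add (by positivity) zero_le_one, add_mul, ENNReal.ofReal_one, one_mul]
    gcongr
    exact hz r hr hrm
  have hV : ∀ k, VK g1 f k x < ENNReal.ofReal (2 * C * d) := by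
    intro k
    apply TK_lt _ _ _ _ hbig2
    have h1 := pointwise_est hD hP (TK_lip g1 f k)
      (fun z => by rw [abs_of_nonneg (TK_nonneg _ _ _ _)]; exact TK_le_one _ _ _ _)
      (TK_ug g1 f k) (GK_le g1 k) hxy (by positivity : (0:ℝ) ≤ (m:ℝ)+1) hbig (hbound x hx) (hbound y hy)
    have h2 : TK g1 f k y = 0 := by
      have := TK_le_of g1 f k y
      have hfy : f y = 0 := by simp [hf]
      rw [hfy, nonpos_iff_eq_zero, ENNReal.ofReal_eq_zero] at this
      exact le_antisymm this (TK_nonneg _ _ _ _)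
    rw [h2, sub_zero, abs_of_nonneg (TK_nonneg _ _ _ _)] at h1
    refine h1.trans_lt ?_
    rw [← hC, ← hd]
    nlinarith [mul_pos hC0 hd0]
  obtain ⟨γ, hγ0, hγ⟩ := VK_limit hg1l hg11 hfl x ENNReal.ofReal_ne_top hV
  have hend : γ.toFun γ.len = y := by
    by_contra hne
    rw [hf, indicator_of_mem (by exact hne), top_add, top_le_iff] at hγ
    exact ENNReal.ofReal_ne_top hγ
  have h3 : ENNReal.ofReal |w x - w y| ≤ ENNReal.ofReal (2 * C * d) := by
    have := hug γ
    rw [UGIneq, hγ0, hend] at this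
    refine this.trans (le_trans ?_ (le_add_self.trans hγ))
    exact lintegral_mono fun t => le_self_add
  have h4 := (ENNReal.ofReal_le_ofReal_iff (by positivity)).1 h3
  have : 0 ≤ 2 * lam * (m+1) * d := by positivity
  rw [hL]; nlinarith

theorem ug_aemeasurable [ProperSpace X] {μ : Measure X} {Cd CP lam : ℝ} (hD : Doubling μ Cd) (hP : Poincare μ CP lam)
    {w : X → ℝ} (hw0 : ∀ x, 0 ≤ w x) (hw1 : ∀ x, w x ≤ 1) {g : X → ℝ≥0∞} (hg : LowerSemicontinuous g)
    (hgi : ∫⁻ x, g x ∂μ ≠ ∞) (hug : ∀ γ : Curve X, UGIneq w g γ) : AEMeasurable w μ := by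
  choose L hL using SM_lip hD hP hw0 hw1 hg hug
  choose e he hew using fun m => (hL m).extend_real
  refine aemeasurable_of_tendsto_metrizable_ae atTop (f := e) (fun m => (he m).continuous.aemeasurable) ?_
  filter_upwards [SM_ae hD hg.measurable hgi] with x hx
  obtain ⟨m, hm⟩ := hx
  refine tendsto_const_nhds.congr' ?_
  filter_upwards [eventually_ge_atTop m] with n hn
  exact hew n (SM_mono μ g hn hm)

theorem cap_prep [ProperSpace X] {μ : Measure X} {Cd CP lam : ℝ} (hD : Doubling μ Cd) (hP : Poincare μ CP lam)
    {A : Set X} {δ : ℝ≥0∞} (hA : capa1 μ A < δ) :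
    ∃ (w : X → ℝ) (g f : X → ℝ≥0∞), (∀ x ∈ A, w x = 1) ∧ LowerSemicontinuous g ∧ LowerSemicontinuous f ∧
      (∀ γ : Curve X, UGIneq w g γ) ∧ (∀ x, ENNReal.ofReal (w x) ≤ f x) ∧ ∫⁻ x, g x ∂μ < δ ∧
      ∫⁻ x, f x ∂μ < δ := by
  have := hD.locFin
  simp only [capa1, NNorm, iInf_lt_iff, ENNReal.add_iInf, Measure.restrict_univ] at hA
  obtain ⟨u, hu, huA, g, ⟨hg, ρ, hρ, hρi, hρ2⟩, hlt⟩ := hA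
  set w : X → ℝ := fun x => max 0 (min (u x) 1) with hw
  have hw0 : ∀ x, 0 ≤ w x := fun x => le_max_left _ _
  have hw1 : ∀ x, w x ≤ 1 := fun x => max_le zero_le_one (min_le_right _ _)
  have hwd : ∀ x y, |w x - w y| ≤ |u x - u y| := by
    intro x y
    simp only [hw]
    refine (abs_max_sub_max_le_max _ _ _ _).trans ?_
    rw [sub_self, abs_zero]
    refine max_le (abs_nonneg _) ?_
    refine (abs_min_sub_min_le_max _ _ _ _).trans ?_
    simp
  have hwu : ∀ x, w x ≤ |u x| := fun x => max_le (abs_nonneg _) ((min_le_left _ _).trans (le_abs_self _))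
  have hwA : ∀ x ∈ A, w x = 1 := by
    intro x hx
    simp only [hw, min_eq_right (huA x hx)]; simp
  have hgl : ∫⁻ x, g x ∂μ < δ := lt_of_le_of_lt le_add_self hlt
  have hul : ∫⁻ x, ENNReal.ofReal |u x| ∂μ < δ := lt_of_le_of_lt le_self_add hlt
  obtain ⟨N, hNs, hN, hN0⟩ := exists_measurable_superset_of_null hg.ae_eq_mk
  obtain ⟨r, hr, hrδ⟩ := ENNReal.lt_iff_exists_add_pos_lt.1 hgl
  have hr2 : ((r:ℝ≥0∞)/2) ≠ 0 := by simp [hr.ne']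
  set I := ∫⁻ x, ρ x ∂μ with hI
  set c : ℝ≥0∞ := ((r:ℝ≥0∞)/2) / (I + 1) with hc
  have hc0 : c ≠ 0 := by
    simp only [hc, ne_eq, ENNReal.div_eq_zero_iff, not_or]
    exact ⟨by simpa using hr.ne', by simp [hρi.ne]⟩
  have hct : c ≠ ∞ := ENNReal.div_ne_top (ENNReal.div_ne_top ENNReal.coe_ne_top (by simp)) (by simp)
  have hcI : c * I ≤ (r:ℝ≥0∞)/2 := by
    calc c * I ≤ c * (I + 1) := by gcongr; exact le_self_add
      _ = _ := ENNReal.div_mul_cancel (by simp) (by simp [hρi.ne])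
  set g' : X → ℝ≥0∞ := fun x => (hg.mk g x + N.indicator (fun _ => ∞) x) + c * ρ x with hg'
  have hmN : Measurable (N.indicator fun _ => (∞:ℝ≥0∞)) := measurable_const.indicator hN
  have hg'm : Measurable g' := (hg.measurable_mk.add hmN).add (hρ.const_mul c)
  have hg'i : ∫⁻ x, g' x ∂μ ≤ ∫⁻ x, g x ∂μ + (r:ℝ≥0∞)/2 := by
    simp only [hg']
    rw [lintegral_add_right _ (hρ.const_mul c), lintegral_add_right _ hmN, lintegral_const_mul _ hρ,
      lintegral_indicator_const hN, hN0, mul_zero, add_zero, ← lintegral_congr_ae hg.ae_eq_mk]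
    gcongr
  obtain ⟨gl, hgl1, hgl2, hgl3⟩ := exists_le_lowerSemicontinuous_lintegral_ge μ g' hg'm hr2
  have hgli : ∫⁻ x, gl x ∂μ < δ := by
    refine lt_of_le_of_lt (hgl3.trans (add_le_add_left hg'i _)) ?_
    rw [add_assoc, ENNReal.add_halves]; exact hrδ
  have hug : ∀ γ : Curve X, UGIneq w gl γ := by
    intro γ
    rw [UGIneq]
    by_cases hγ : γ.integral ρ = ∞
    · have : γ.integral gl = ∞ := by
        rw [← top_le_iff]
        calc ∞ = c * γ.integral ρ := by rw [hγ, ENNReal.mul_top hc0]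
          _ = ∫⁻ t in Icc 0 γ.len, c * ρ (γ.toFun t) := by
            rw [Curve.integral, lintegral_const_mul' _ _ hct]
          _ ≤ _ := lintegral_mono fun t => le_trans le_add_self (hgl1 _)
      rw [this]; exact le_top
    · have h1 : UGIneq u g γ := by
        by_contra hn
        exact hγ (hρ2 γ ⟨fun _ _ => mem_univ _, hn⟩)
      rw [UGIneq] at h1
      refine (ENNReal.ofReal_le_ofReal (hwd _ _)).trans (h1.trans ?_)
      refine lintegral_mono fun t => le_trans ?_ (hgl1 _)
      refine le_trans ?_ le_self_add
      by_cases hx : γ.toFun t ∈ N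
      · rw [indicator_of_mem hx, add_top]; exact le_top
      · refine le_trans (le_of_eq ?_) le_self_add
        by_contra hne
        exact hx (hNs hne)
  have hwm := ug_aemeasurable hD hP hw0 hw1 hgl2 hgli.ne_top hug
  have hwi : ∫⁻ x, ((w x).toNNReal : ℝ≥0∞) ∂μ < δ := by
    refine lt_of_le_of_lt (lintegral_mono fun x => ?_) hul
    exact ENNReal.ofReal_le_ofReal (hwu x)
  obtain ⟨s, hs, hsδ⟩ := ENNReal.lt_iff_exists_add_pos_lt.1 hwi
  obtain ⟨f, hf1, hf2, hf3⟩ := exists_lt_lowerSemicontinuous_lintegral_ge_of_aemeasurable μ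
    (fun x => (w x).toNNReal) hwm.real_toNNReal (ε := s) (by simpa using hs.ne')
  exact ⟨w, gl, f, hwA, hgl2, hf2, hug, fun x => (hf1 x).le, hgli, hf3.trans_lt hsδ⟩

theorem cap_lemma [ProperSpace X] {μ : Measure X} {Cd CP lam : ℝ} (hD : Doubling μ Cd) (hP : Poincare μ CP lam)
    {A : Set X} {δ : ℝ≥0∞} (hA : capa1 μ A < δ) :
    ∃ (h : ℕ → X → ℝ) (W : ℕ → Set X) (G : ℕ → X → ℝ≥0∞), (∀ k, IsOpen (W k)) ∧ Monotone W ∧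
      A ⊆ ⋃ k, W k ∧ (∀ k, ∃ K, LipschitzWith K (h k)) ∧ (∀ k x, 0 ≤ h k x ∧ h k x ≤ 1) ∧
      (∀ k, ∀ x ∈ W k, h k x = 1) ∧ (∀ k, Measurable (G k)) ∧
      (∀ k (γ : Curve X), ∀ᵐ t ∂(volume.restrict (Icc (0:ℝ) γ.len)),
        ENNReal.ofReal |deriv (fun t => h k (γ.toFun t)) t| ≤ G k (γ.toFun t)) ∧
      (∀ k, ∫⁻ x, G k x ∂μ ≤ 12 * δ) ∧ (∀ k, ∫⁻ x, ENNReal.ofReal (h k x) ∂μ ≤ 2 * δ) := by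
  obtain ⟨w, g, f, hwA, hg, hf, hug, hwf, hgi, hfi⟩ := cap_prep hD hP hA
  set g1 : X → ℝ≥0∞ := fun z => g z + 1 with hg1
  have hg1l : LowerSemicontinuous g1 := hg.add lowerSemicontinuous_const
  have hg11 : ∀ z, 1 ≤ g1 z := fun z => le_add_self
  set T := TK g1 f with hT
  have hTc : ∀ k, Continuous (T k) := fun k => (TK_lip g1 f k).continuous
  set S : ℕ → Set X := fun k => {x | 1/2 < T k x} with hS
  have hSm : ∀ k, MeasurableSet (S k) := fun k => (isOpen_lt continuous_const (hTc k)).measurableSet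
  have hSμ : ∀ k, μ (S k) ≤ 2 * δ := by
    intro k
    have h1 : S k ⊆ {x | 2⁻¹ ≤ f x} := by
      intro x hx
      have h2 : ENNReal.ofReal (T k x) ≤ f x := TK_le_of g1 f k x
      refine le_trans ?_ h2
      rw [show (2⁻¹:ℝ≥0∞) = ENNReal.ofReal (1/2) by
        rw [ENNReal.ofReal_div_of_pos two_pos]; simp]
      exact ENNReal.ofReal_le_ofReal (le_of_lt hx)
    have h2 := mul_meas_ge_le_lintegral (μ := μ) hf.measurable 2⁻¹
    calc μ (S k) ≤ μ {x | 2⁻¹ ≤ f x} := measure_mono h1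
      _ = 2 * (2⁻¹ * μ {x | 2⁻¹ ≤ f x}) := by
        rw [← mul_assoc, ENNReal.mul_inv_cancel (by simp) (by simp), one_mul]
      _ ≤ 2 * δ := by gcongr; exact h2.trans hfi.le
  set h : ℕ → X → ℝ := fun k x => max 0 (min 1 (4 * T k x - 2)) with hh
  have hhS : ∀ k x, x ∉ S k → h k x = 0 := by
    intro k x hx
    simp only [hS, mem_setOf_eq, not_lt] at hx
    simp only [hh]
    exact max_eq_left ((min_le_right _ _).trans (by linarith))
  have hh0 : ∀ k x, 0 ≤ h k x := fun k x => le_max_left _ _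
  have hh1 : ∀ k x, h k x ≤ 1 := fun k x => max_le zero_le_one (min_le_left _ _)
  have hhd : ∀ k x y, |h k x - h k y| ≤ |(4 * T k x - 2) - (4 * T k y - 2)| := by
    intro k x y
    simp only [hh]
    refine (abs_max_sub_max_le_max _ _ _ _).trans ?_
    rw [sub_self, abs_zero]
    refine max_le (abs_nonneg _) ?_
    refine (abs_min_sub_min_le_max _ _ _ _).trans ?_
    simp
  have hhd2 : ∀ k x y, T k y ≤ T k x → h k x - h k y ≤ 4 * (T k x - T k y) := by
    intro k x y hle
    have h1 := (abs_le.1 (hhd k x y)).2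
    have h2 := le_abs_self (h k x - h k y)
    have h3 := hhd k x y
    rw [abs_of_nonneg (a := (4 * T k x - 2) - (4 * T k y - 2)) (by linarith)] at h3
    linarith
  have hhmono : ∀ k x y, T k x ≤ T k y → h k x ≤ h k y := by
    intro k x y hle
    simp only [hh]
    gcongr
  set G : ℕ → X → ℝ≥0∞ := fun k => (S k).indicator (fun x => 4 * GK g1 k x) with hG
  refine ⟨h, fun k => {x | 3/4 < T k x}, G, fun k => isOpen_lt continuous_const (hTc k), ?_, ?_, ?_, ?_, ?_, ?_, ?_, ?_, ?_⟩
  · intro k m hkm x hx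
    exact lt_of_lt_of_le hx (TK_mono g1 f hkm x)
  · intro x hx
    by_contra hcon
    simp only [mem_iUnion, mem_setOf_eq, not_exists, not_lt] at hcon
    have hV : ∀ k, VK g1 f k x < ENNReal.ofReal (4/5) := fun k =>
      TK_lt _ _ _ _ (by norm_num) (lt_of_le_of_lt (hcon k) (by norm_num))
    obtain ⟨γ, hγ0, hγ⟩ := VK_limit hg1l hg11 hf x ENNReal.ofReal_ne_top hV
    have h1 := hug γ
    rw [UGIneq, hγ0, hwA x hx] at h1
    have h2 : (1:ℝ≥0∞) ≤ ENNReal.ofReal (4/5) := by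
      calc (1:ℝ≥0∞) = ENNReal.ofReal 1 := by simp
        _ ≤ ENNReal.ofReal (w (γ.toFun γ.len) + |1 - w (γ.toFun γ.len)|) :=
          ENNReal.ofReal_le_ofReal (by linarith [le_abs_self (1 - w (γ.toFun γ.len))])
        _ ≤ ENNReal.ofReal (w (γ.toFun γ.len)) + ENNReal.ofReal |1 - w (γ.toFun γ.len)| := ENNReal.ofReal_add_le
        _ ≤ f (γ.toFun γ.len) + γ.integral g1 := by
          refine add_le_add (hwf _) (h1.trans ?_)
          exact lintegral_mono fun t => le_self_add
        _ ≤ _ := hγ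
    rw [← ENNReal.ofReal_one, ENNReal.ofReal_le_ofReal_iff (by norm_num)] at h2
    norm_num at h2
  · intro k
    refine ⟨4 * (k+1), LipschitzWith.of_dist_le_mul fun x y => ?_⟩
    have h1 := (TK_lip g1 f k).dist_le_mul x y
    rw [Real.dist_eq] at h1 ⊢
    refine (hhd k x y).trans ?_
    rw [show (4 * T k x - 2) - (4 * T k y - 2) = 4 * (T k x - T k y) by ring, abs_mul]
    push_cast at h1 ⊢
    rw [abs_of_pos (by norm_num : (0:ℝ) < 4), mul_assoc]
    gcongr
  · exact fun k x => ⟨hh0 k x, hh1 k x⟩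
  · intro k x hx
    have hx : 3/4 < T k x := hx
    simp only [hh]
    rw [min_eq_left (by linarith)]; simp
  · intro k
    exact (((GK_cont g1 k).measurable).const_mul 4).indicator (hSm k)
  · intro k γ
    refine curve_deriv_bound (rk_pos k) (fun x => ?_) (fun x y hxy => ?_) γ
    · simp only [hG]
      by_cases hx : x ∈ S k
      · rw [indicator_of_mem hx]
        exact ENNReal.mul_ne_top (by simp) (GK_lt_top _ _ _).ne
      · rw [indicator_of_notMem hx]; simp
    · simp only [hG]
      by_cases hx : x ∈ S k
      · rw [indicator_of_mem hx, ENNReal.toReal_mul]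
        have h1 : T k x - T k y ≤ (GK g1 k x).toReal * dist x y := TK_step g1 f k x y hxy
        have h2 : 0 ≤ (GK g1 k x).toReal * dist x y := by positivity
        have h3 : (4:ℝ≥0∞).toReal = 4 := by simp
        rw [h3]
        rcases le_total (T k y) (T k x) with h | h
        · linarith [hhd2 k x y h]
        · linarith [hhmono k x y h]
      · rw [indicator_of_notMem hx, hhS k x hx]
        simp [hh0 k y]
  · intro k
    calc ∫⁻ x, G k x ∂μ = ∫⁻ x in S k, 4 * GK g1 k x ∂μ := lintegral_indicator (hSm k) _
      _ ≤ ∫⁻ x in S k, (4 * g x + 4) ∂μ := by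
        refine lintegral_mono fun x => ?_
        calc 4 * GK g1 k x ≤ 4 * (g x + 1) := by gcongr; exact GK_le g1 k x
          _ = _ := by rw [mul_add, mul_one]
      _ = 4 * ∫⁻ x in S k, g x ∂μ + 4 * μ (S k) := by
        rw [lintegral_add_right _ measurable_const, setLIntegral_const, lintegral_const_mul _ hg.measurable]
      _ ≤ 4 * δ + 4 * (2 * δ) := by
        gcongr
        · exact (setLIntegral_le_lintegral _ _).trans hgi.le
        · exact hSμ k
      _ = 12 * δ := by ring
  · intro k
    calc ∫⁻ x, ENNReal.ofReal (h k x) ∂μ ≤ ∫⁻ x, (S k).indicator (fun _ => 1) x ∂μ := by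
          refine lintegral_mono fun x => ?_
          by_cases hx : x ∈ S k
          · rw [indicator_of_mem hx]; simpa using hh1 k x
          · rw [hhS k x hx]; simp
      _ = μ (S k) := lintegral_indicator_one (hSm k)
      _ ≤ _ := hSμ k

theorem LocLipOn.mono {v : X → ℝ} {Ω O : Set X} (h : LocLipOn v Ω) (hO : O ⊆ Ω) : LocLipOn v O := by
  intro x hx
  obtain ⟨r, hr, K, hK⟩ := h x (hO hx)
  exact ⟨r, hr, K, hK.mono (inter_subset_inter_left _ hO)⟩

theorem wug_mono {μ : Measure X} {v : X → ℝ} {g : X → ℝ≥0∞} {Ω O : Set X}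
    (h : IsWeakUpperGradientOn μ v g Ω) (hO : O ⊆ Ω) : IsWeakUpperGradientOn μ v g O := by
  obtain ⟨hg, ρ, h1, h2, h3⟩ := h
  exact ⟨hg, ρ, h1, h2, fun γ hγ => h3 γ ⟨fun t ht => hO (hγ.1 t ht), hγ.2⟩⟩

theorem locInt_of_fin {μ : Measure X} {g : X → ℝ≥0∞} {Ω : Set X} (h : ∫⁻ x in Ω, g x ∂μ < ∞) :
    LIntegrableLocOn μ g Ω := fun x _ => ⟨1, one_pos, (lintegral_mono_set inter_subset_left).trans_lt h⟩

theorem min_le {μ : Measure X} {v : X → ℝ} {g g' : X → ℝ≥0∞} {Ω : Set X} (hg : IsMinimalWUG μ v g Ω)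
    (hg' : IsWeakUpperGradientOn μ v g' Ω) : ∫⁻ x in Ω, g x ∂μ ≤ ∫⁻ x in Ω, g' x ∂μ := by
  by_cases h : ∫⁻ x in Ω, g' x ∂μ < ∞
  · exact lintegral_mono_ae (hg.2 g' hg' (locInt_of_fin h))
  · rw [not_lt, top_le_iff] at h
    rw [h]; exact le_top

theorem tv_lower [SecondCountableTopology X] {μ : Measure X} [SigmaFinite μ] {Ω O : Set X} (hO : IsOpen O)
    (hOΩ : O ⊆ Ω) {u : X → ℝ} {v : ℕ → X → ℝ} {g : ℕ → X → ℝ≥0∞} (hv : ∀ i, LocLipOn (v i) Ω)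
    (hg : ∀ i, IsMinimalWUG μ (v i) (g i) Ω) (hL : L1LocConv μ Ω v u) {a : ℝ≥0∞}
    (ha : a < tvOpen μ O u) : ∀ᶠ i in atTop, a ≤ ∫⁻ x in O, g i x ∂μ := by
  by_contra hcon
  rw [not_eventually] at hcon
  choose g' hg' using fun i => exists_minimal μ hO ((hv i).mono hOΩ)
  have hL' : L1LocConv μ O v u := by
    intro x hx
    obtain ⟨r, hr, ht⟩ := hL x (hOΩ hx)
    refine ⟨r, hr, tendsto_of_tendsto_of_tendsto_of_le_of_le tendsto_const_nhds ht (fun _ => zero_le) ?_⟩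
    intro i
    exact lintegral_mono_set (inter_subset_inter_left _ hOΩ)
  have h1 : tvOpen μ O u ≤ liminf (fun i => ∫⁻ x in O, g' i x ∂μ) atTop := by
    refine (iInf₂_le v g').trans ((iInf₂_le (fun i => (hv i).mono hOΩ) hg').trans (iInf_le _ hL'))
  have h2 : liminf (fun i => ∫⁻ x in O, g' i x ∂μ) atTop ≤ a := by
    apply liminf_le_of_frequently_le'
    refine hcon.mono fun i hi => ?_
    push Not at hi
    exact (min_le (hg' i) (wug_mono (hg i).1 hOΩ)).trans hi.le
  exact absurd (h1.trans h2) (not_le.2 ha)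

/-- truncation -/
def clampM (M t : ℝ) : ℝ := max (-M) (min M t)

theorem clampM_abs {M : ℝ} (hM : 0 ≤ M) (t : ℝ) : |clampM M t| ≤ M := by
  rw [abs_le]
  exact ⟨le_max_left _ _, max_le (by linarith) (min_le_left _ _)⟩

theorem clampM_sub (M s t : ℝ) : |clampM M s - clampM M t| ≤ |s - t| := by
  simp only [clampM]
  refine (abs_max_sub_max_le_max _ _ _ _).trans ?_
  rw [sub_self, abs_zero]
  refine max_le (abs_nonneg _) ?_
  refine (abs_min_sub_min_le_max _ _ _ _).trans ?_
  simp

theorem clampM_self {M : ℝ} (hM : 0 ≤ M) (t : ℝ) : |clampM M t - t| ≤ max 0 (|t| - M) := by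
  simp only [clampM]
  rcases le_total M t with h | h
  · rw [min_eq_left h, max_eq_right (by linarith), abs_of_nonneg (by linarith : 0 ≤ t), abs_sub_comm,
      abs_of_nonneg (by linarith)]
    exact le_max_right _ _
  · rw [min_eq_right h]
    rcases le_total (-M) t with h' | h'
    · rw [max_eq_right h']; simp
    · rw [max_eq_left h', abs_of_nonpos (by linarith : t ≤ 0), abs_of_nonneg (by linarith)]
      refine le_trans ?_ (le_max_right _ _)
      linarith

theorem prod_est {M a b p q : ℝ} (hM : 0 ≤ M) (hp0 : 0 ≤ p) (hp1 : p ≤ 1) :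
    |clampM M a * (1 - p) - clampM M b * (1 - q)| ≤ 1 * |a - b| + M * |p - q| := by
  have e : clampM M a * (1 - p) - clampM M b * (1 - q) =
      (clampM M a - clampM M b) * (1 - p) + clampM M b * (q - p) := by ring
  rw [e]
  refine (abs_add_le _ _).trans ?_
  rw [abs_mul, abs_mul, abs_sub_comm q p, abs_of_nonneg (by linarith : 0 ≤ 1 - p)]
  have h1 := clampM_sub M a b
  have h2 := clampM_abs hM b
  have h3 := abs_nonneg (clampM M a - clampM M b)
  have h4 := abs_nonneg (p - q)
  nlinarith

theorem prod_lip {v h : X → ℝ} {Ω : Set X} {M : ℝ} (hM : 0 ≤ M) (hv : LocLipOn v Ω) {K : ℝ≥0}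
    (hh : LipschitzWith K h) (h01 : ∀ x, 0 ≤ h x ∧ h x ≤ 1) :
    LocLipOn (fun x => clampM M (v x) * (1 - h x)) Ω := by
  intro x hx
  obtain ⟨r, hr, K', hK'⟩ := hv x hx
  refine ⟨r, hr, K' + M.toNNReal * K, LipschitzOnWith.of_dist_le_mul fun y hy z hz => ?_⟩
  rw [Real.dist_eq]
  refine (prod_est hM (h01 y).1 (h01 y).2).trans ?_
  have h1 := hK'.dist_le_mul y hy z hz
  have h2 := hh.dist_le_mul y z
  rw [Real.dist_eq] at h1 h2
  push_cast
  rw [Real.coe_toNNReal _ hM]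
  have := mul_le_mul_of_nonneg_left h2 hM
  linarith

theorem prod_der {μ : Measure X} {v h : X → ℝ} {g G : X → ℝ≥0∞} {Ω W : Set X} {M : ℝ} (hM : 0 ≤ M) (hΩ : IsOpen Ω)
    (hW : IsOpen W) (hv : LocLipOn v Ω) {K : ℝ≥0}
    (hh : LipschitzWith K h) (h01 : ∀ x, 0 ≤ h x ∧ h x ≤ 1) (hhW : ∀ x ∈ W, h x = 1)
    (hd : DerBound μ v g Ω)
    (hG : ∀ γ : Curve X, ∀ᵐ t ∂(volume.restrict (Icc (0:ℝ) γ.len)),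
        ENNReal.ofReal |deriv (fun t => h (γ.toFun t)) t| ≤ G (γ.toFun t)) :
    DerBound μ (fun x => clampM M (v x) * (1 - h x)) (fun x => Wᶜ.indicator g x + ENNReal.ofReal M * G x) Ω := by
  obtain ⟨ρ, h1, h2, H⟩ := hd
  refine ⟨ρ, h1, h2, fun γ hγ hρ => ?_⟩
  have H' := H γ hγ hρ
  obtain ⟨K1, hK1⟩ := locLip_comp hΩ hv γ hγ
  have hK2 : LipschitzOnWith (K * 1) (fun t => h (γ.toFun t)) (Icc 0 γ.len) := hh.comp_lipschitzOnWith γ.lip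
  have d1 : ∀ᵐ t, t ∈ Icc 0 γ.len → DifferentiableWithinAt ℝ (fun t => v (γ.toFun t)) (Icc 0 γ.len) t :=
    hK1.ae_differentiableWithinAt_of_mem
  have d2 : ∀ᵐ t, t ∈ Icc 0 γ.len → DifferentiableWithinAt ℝ (fun t => h (γ.toFun t)) (Icc 0 γ.len) t :=
    hK2.ae_differentiableWithinAt_of_mem
  have hGγ := hG γ
  rw [← restrict_Ioo_eq_restrict_Icc, ae_restrict_iff' measurableSet_Ioo] at H' hGγ ⊢
  filter_upwards [d1, d2, H', hGγ] with t d1 d2 b1 b2 ht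
  have hm : Icc 0 γ.len ∈ 𝓝 t := Icc_mem_nhds ht.1 ht.2
  have htc := Ioo_subset_Icc_self ht
  have d1 := (d1 htc).differentiableAt hm
  have d2 := (d2 htc).differentiableAt hm
  by_cases hW' : γ.toFun t ∈ W
  · have hc : ContinuousAt γ.toFun t := γ.lip.continuousOn.continuousAt hm
    have : (fun t => clampM M (v (γ.toFun t)) * (1 - h (γ.toFun t))) =ᶠ[𝓝 t] fun _ => 0 := by
      filter_upwards [hc.eventually (hW.mem_nhds hW')] with s hs
      rw [hhW _ hs]; simp
    rw [this.deriv_eq]; simp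
  · rw [indicator_of_mem (show γ.toFun t ∈ Wᶜ from hW')]
    have := deriv_bound (a := fun t => clampM M (v (γ.toFun t)) * (1 - h (γ.toFun t))) zero_le_one hM d1 d2
      (Eventually.of_forall fun s => prod_est hM (h01 _).1 (h01 _).2)
    refine (ENNReal.ofReal_le_ofReal this).trans ?_
    rw [one_mul, ENNReal.ofReal_add (abs_nonneg _) (by positivity), ENNReal.ofReal_mul hM]
    gcongr
    · exact b1 ht
    · exact b2 ht

theorem step_lemma [ProperSpace X] {μ : Measure X} [IsLocallyFiniteMeasure μ] {Cd CP lam : ℝ}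
    (hD : Doubling μ Cd) (hP : Poincare μ CP lam)
    {Ω : Set X} (hΩ : IsOpen Ω) {u : X → ℝ} {v : ℕ → X → ℝ} {g : ℕ → X → ℝ≥0∞} (hv : ∀ i, LocLipOn (v i) Ω)
    (hg : ∀ i, IsMinimalWUG μ (v i) (g i) Ω) (hL : L1LocConv μ Ω v u) {T : ℝ≥0∞}
    (hlim : liminf (fun i => ∫⁻ x in Ω, g i x ∂μ) atTop < T)
    {A : Set X} (hA : A ⊆ Ω) {δ : ℝ≥0∞} (hcap : capa1 μ A < δ) {M : ℝ} (hM : 0 ≤ M)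
    {η : ℝ≥0∞} (hη0 : η ≠ 0) (hηt : η ≠ ∞) (htv : 8 * η ≤ tv μ A u) (j : ℕ) :
    ∃ i ≥ j, ∃ (gF : X → ℝ≥0∞) (h : X → ℝ),
      LocLipOn (fun x => clampM M (v i x) * (1 - h x)) Ω ∧
      IsMinimalWUG μ (fun x => clampM M (v i x) * (1 - h x)) gF Ω ∧
      (∫⁻ x in Ω, gF x ∂μ) + 6 * η ≤ T + ENNReal.ofReal M * (12 * δ) ∧
      Measurable h ∧ (∀ x, 0 ≤ h x ∧ h x ≤ 1) ∧ (∫⁻ x, ENNReal.ofReal (h x) ∂μ) ≤ 2 * δ := by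
  obtain ⟨h, W, G, hWo, hWm, hAW, hLip, h01, hhW, hGm, hGd, hGi, hhi⟩ := cap_lemma hD hP hcap
  have hOo : IsOpen ((⋃ k, W k) ∩ Ω) := (isOpen_iUnion hWo).inter hΩ
  have h8 : 8 * η ≤ tvOpen μ ((⋃ k, W k) ∩ Ω) u :=
    htv.trans ((iInf₂_le _ hOo).trans (iInf_le _ (subset_inter hAW hA)))
  have h7 : 7 * η < tvOpen μ ((⋃ k, W k) ∩ Ω) u :=
    lt_of_lt_of_le (ENNReal.mul_lt_mul_left hη0 hηt (by norm_num)) h8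
  have ev := tv_lower hOo inter_subset_right hv hg hL h7
  have fr := frequently_lt_of_liminf_lt (by isBoundedDefault) hlim
  obtain ⟨i, hi1, hi2, hij⟩ := (fr.and_eventually (ev.and (eventually_ge_atTop j))).exists
  have h6 : 6 * η < ∫⁻ x in (⋃ k, W k) ∩ Ω, g i x ∂μ :=
    lt_of_lt_of_le (ENNReal.mul_lt_mul_left hη0 hηt (by norm_num)) hi2
  have hk : ∃ k, 6 * η < ∫⁻ x in W k ∩ Ω, g i x ∂μ := by
    rw [iUnion_inter, setLIntegral_iUnion_of_directed] at h6
    · exact lt_iSup_iff.1 h6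
    · exact (Monotone.directed_le fun a b hab => inter_subset_inter_left _ (hWm hab))
  obtain ⟨k, hk⟩ := hk
  obtain ⟨K, hK⟩ := hLip k
  have hFl := prod_lip hM (hv i) hK (h01 k)
  obtain ⟨gF, hgF⟩ := exists_minimal μ hΩ hFl
  have hT : ∫⁻ x in Ω, g i x ∂μ < ∞ := lt_of_lt_of_le hi1 le_top
  have hdb := prod_der hM hΩ (hWo k) (hv i) hK (h01 k) (hhW k)
    (wug_derBound hΩ (hg i).1 (locInt_of_fin hT)) (hGd k)
  have hgm : AEMeasurable (g i) μ := (hg i).1.1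
  have hw := hdb.wug hΩ hFl ((hgm.indicator (hWo k).measurableSet.compl).add
    ((hGm k).const_mul _).aemeasurable)
  have hle := min_le hgF hw
  refine ⟨i, hij, gF, h k, hFl, hgF, ?_, hK.continuous.measurable, h01 k, hhi k⟩
  have e1 : ∫⁻ x in Ω, ((W k)ᶜ.indicator (g i) x + ENNReal.ofReal M * G k x) ∂μ ≤
      (∫⁻ x in (W k)ᶜ ∩ Ω, g i x ∂μ) + ENNReal.ofReal M * (12 * δ) := by
    rw [lintegral_add_right _ ((hGm k).const_mul _), lintegral_const_mul _ (hGm k),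
      lintegral_indicator (hWo k).measurableSet.compl, Measure.restrict_restrict (hWo k).measurableSet.compl]
    gcongr
    exact (setLIntegral_le_lintegral _ _).trans (hGi k)
  have e2 : (∫⁻ x in W k ∩ Ω, g i x ∂μ) + (∫⁻ x in (W k)ᶜ ∩ Ω, g i x ∂μ) = ∫⁻ x in Ω, g i x ∂μ := by
    rw [← Measure.restrict_restrict (hWo k).measurableSet, ← Measure.restrict_restrict (hWo k).measurableSet.compl]
    exact lintegral_add_compl _ (hWo k).measurableSet
  calc (∫⁻ x in Ω, gF x ∂μ) + 6 * η ≤ ((∫⁻ x in (W k)ᶜ ∩ Ω, g i x ∂μ) + ENNReal.ofReal M * (12 * δ)) +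
        (∫⁻ x in W k ∩ Ω, g i x ∂μ) := by gcongr; exact hle.trans e1
    _ = (∫⁻ x in Ω, g i x ∂μ) + ENNReal.ofReal M * (12 * δ) := by rw [← e2]; ring
    _ ≤ _ := by gcongr

theorem conv_lemma {μ : Measure X} {Ω : Set X} (hΩ : IsOpen Ω) {u : X → ℝ} (hu : MemL1Loc μ Ω u)
    {v : ℕ → X → ℝ} (hL : L1LocConv μ Ω v u) {i : ℕ → ℕ} (hi : ∀ j, j ≤ i j) {h : ℕ → X → ℝ}
    (hm : ∀ j, Measurable (h j)) (h01 : ∀ j x, 0 ≤ h j x ∧ h j x ≤ 1)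
    (hh : ∀ j, (∫⁻ x, ENNReal.ofReal (h j x) ∂μ) ≤ 2 * ENNReal.ofReal ((1/4)^j)) :
    L1LocConv μ Ω (fun j x => clampM (2^j) (v (i j) x) * (1 - h j x)) u := by
  intro x hx
  obtain ⟨r1, hr1, t1⟩ := hL x hx
  obtain ⟨r2, hr2, f2⟩ := hu.2 x hx
  refine ⟨min r1 r2, lt_min hr1 hr2, ?_⟩
  have s1 : Ω ∩ ball x (min r1 r2) ⊆ Ω ∩ ball x r1 := inter_subset_inter_right _ (ball_subset_ball (min_le_left _ _))
  have s2 : Ω ∩ ball x (min r1 r2) ⊆ Ω ∩ ball x r2 := inter_subset_inter_right _ (ball_subset_ball (min_le_right _ _))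
  set S := Ω ∩ ball x (min r1 r2) with hS
  have hum : AEMeasurable u (μ.restrict S) := hu.1.mono_measure (Measure.restrict_mono inter_subset_left le_rfl)
  have a1 : Tendsto (fun j => ∫⁻ y in S, ENNReal.ofReal |v (i j) y - u y| ∂μ) atTop (𝓝 0) :=
    tendsto_of_tendsto_of_tendsto_of_le_of_le tendsto_const_nhds
      (t1.comp (tendsto_atTop_mono hi tendsto_id)) (fun _ => zero_le) (fun j => lintegral_mono_set s1)
  have a2 : Tendsto (fun j : ℕ => ENNReal.ofReal (2 * (1/2)^j)) atTop (𝓝 0) := by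
    have : Tendsto (fun j : ℕ => (2 * (1/2)^j : ℝ)) atTop (𝓝 (2 * 0)) :=
      (tendsto_pow_atTop_nhds_zero_of_lt_one (by norm_num) (by norm_num)).const_mul 2
    simpa using ENNReal.tendsto_ofReal this
  have a3 : Tendsto (fun j : ℕ => ∫⁻ y in S, ENNReal.ofReal (max 0 (|u y| - 2^j)) ∂μ) atTop (𝓝 0) := by
    have := tendsto_lintegral_of_dominated_convergence' (μ := μ.restrict S)
      (F := fun (j : ℕ) y => ENNReal.ofReal (max 0 (|u y| - 2^j))) (f := fun _ => 0)
      (fun y => ENNReal.ofReal |u y|) ?_ ?_ ?_ ?_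
    · simpa using this
    · intro n
      have : AEMeasurable (fun y => |u y|) (μ.restrict S) := measurable_abs.comp_aemeasurable hum
      exact (aemeasurable_const.max (this.sub aemeasurable_const)).ennreal_ofReal
    · intro n
      refine Eventually.of_forall fun y => ENNReal.ofReal_le_ofReal ?_
      have : (0:ℝ) < 2^n := by positivity
      exact max_le (abs_nonneg _) (by linarith)
    · exact ((lintegral_mono_set s2).trans_lt f2).ne
    · refine Eventually.of_forall fun y => ?_
      refine tendsto_const_nhds.congr' ?_
      have : Tendsto (fun j : ℕ => (2:ℝ)^j) atTop atTop := tendsto_pow_atTop_atTop_of_one_lt (by norm_num)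
      filter_upwards [this.eventually_ge_atTop |u y|] with j hj
      rw [max_eq_left (by linarith)]; simp
  have a4 : Tendsto (fun j : ℕ => (∫⁻ y in S, ENNReal.ofReal |v (i j) y - u y| ∂μ) +
      (ENNReal.ofReal (2 * (1/2)^j) + ∫⁻ y in S, ENNReal.ofReal (max 0 (|u y| - 2^j)) ∂μ)) atTop (𝓝 0) := by
    simpa using a1.add (a2.add a3)
  refine tendsto_of_tendsto_of_tendsto_of_le_of_le tendsto_const_nhds a4 (fun _ => zero_le) (fun j => ?_)
  have hmax : AEMeasurable (fun y => ENNReal.ofReal (max 0 (|u y| - 2^j))) (μ.restrict S) := by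
    have : AEMeasurable (fun y => |u y|) (μ.restrict S) := measurable_abs.comp_aemeasurable hum
    exact (aemeasurable_const.max (this.sub aemeasurable_const)).ennreal_ofReal
  have hmh : Measurable (fun y => ENNReal.ofReal (2^j) * ENNReal.ofReal (h j y)) :=
    (hm j).ennreal_ofReal.const_mul _
  have hpt : ∀ y, ENNReal.ofReal |clampM (2^j) (v (i j) y) * (1 - h j y) - u y| ≤
      ENNReal.ofReal |v (i j) y - u y| + (ENNReal.ofReal (2^j) * ENNReal.ofReal (h j y) +
        ENNReal.ofReal (max 0 (|u y| - 2^j))) := by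
    intro y
    have p2 : (0:ℝ) ≤ 2^j := by positivity
    rw [← ENNReal.ofReal_mul p2, ← ENNReal.ofReal_add (mul_nonneg p2 (h01 j y).1) (le_max_left _ _),
      ← ENNReal.ofReal_add (abs_nonneg _) (add_nonneg (mul_nonneg p2 (h01 j y).1) (le_max_left _ _))]
    apply ENNReal.ofReal_le_ofReal
    have e : clampM (2^j) (v (i j) y) * (1 - h j y) - u y =
      (clampM (2^j) (v (i j) y) - clampM (2^j) (u y)) + (-(clampM (2^j) (v (i j) y) * h j y) +
        (clampM (2^j) (u y) - u y)) := by ring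
    rw [e]
    refine (abs_add_le _ _).trans (add_le_add (clampM_sub _ _ _) ?_)
    refine (abs_add_le _ _).trans (add_le_add ?_ (clampM_self p2 _))
    rw [abs_neg, abs_mul, abs_of_nonneg (h01 j y).1]
    exact mul_le_mul_of_nonneg_right (clampM_abs p2 _) (h01 j y).1
  refine (lintegral_mono hpt).trans ?_
  have hsum : AEMeasurable (fun y => ENNReal.ofReal (2^j) * ENNReal.ofReal (h j y) +
      ENNReal.ofReal (max 0 (|u y| - 2^j))) (μ.restrict S) := hmh.aemeasurable.add hmax
  rw [lintegral_add_right' _ hsum, lintegral_add_left hmh,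
    lintegral_const_mul _ (hm j).ennreal_ofReal]
  gcongr
  calc ENNReal.ofReal (2^j) * ∫⁻ y in S, ENNReal.ofReal (h j y) ∂μ
      ≤ ENNReal.ofReal (2^j) * (2 * ENNReal.ofReal ((1/4)^j)) := by
        gcongr; exact (setLIntegral_le_lintegral _ _).trans (hh j)
    _ = ENNReal.ofReal (2 * (1/2)^j) := by
        rw [← ENNReal.ofReal_ofNat 2, ← ENNReal.ofReal_mul (by norm_num), ← ENNReal.ofReal_mul (by positivity)]
        congr 1
        rw [mul_left_comm, ← mul_pow]; norm_num

/-- Absolute continuity of the variation measure with respect to the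
`1`-capacity: if `Ω` is open and `u ∈ L¹_loc(Ω)` with `‖Du‖(Ω) < ∞`, then for every
`ε > 0` there is `δ > 0` such that `A ⊆ Ω` and `capa₁(A) < δ` imply `‖Du‖(A) < ε`. -/
theorem tv_absolutely_continuous_wrt_capa
    (μ : Measure X) (hcomp : CompleteSpace X)
    (hdoub : ∃ Cd : ℝ, Doubling μ Cd) (hpoin : ∃ CP lam : ℝ, Poincare μ CP lam)
    (Ω : Set X) (hΩ : IsOpen Ω) (u : X → ℝ)
    (hu : MemL1Loc μ Ω u) (hfin : tvOpen μ Ω u < ∞) :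
    ∀ ε : ℝ, 0 < ε → ∃ δ : ℝ, 0 < δ ∧
      ∀ A : Set X, A ⊆ Ω → capa1 μ A < ENNReal.ofReal δ → tv μ A u < ENNReal.ofReal ε := by
  obtain ⟨Cd, hD⟩ := hdoub
  obtain ⟨CP, lam, hP⟩ := hpoin
  have : ProperSpace X := hD.proper
  have : IsLocallyFiniteMeasure μ := hD.locFin
  intro ε hε
  by_contra hcon
  push Not at hcon
  have hc : ∀ j : ℕ, ∃ A, A ⊆ Ω ∧ capa1 μ A < ENNReal.ofReal ((1/4)^j) ∧ ENNReal.ofReal ε ≤ tv μ A u :=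
    fun j => hcon _ (by positivity)
  choose A hAΩ hAc hAt using hc
  set η := ENNReal.ofReal (ε/8) with hη
  have hη0 : η ≠ 0 := by
    rw [hη, ne_eq, ENNReal.ofReal_eq_zero, not_le]; positivity
  have hηt : η ≠ ∞ := ENNReal.ofReal_ne_top
  have h8 : 8 * η = ENNReal.ofReal ε := by
    rw [hη, ← ENNReal.ofReal_ofNat 8, ← ENNReal.ofReal_mul (by norm_num)]
    congr 1; ring
  have hlt : tvOpen μ Ω u < tvOpen μ Ω u + η := ENNReal.lt_add_right hfin.ne hη0
  conv_lhs at hlt => rw [tvOpen]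
  simp only [iInf_lt_iff] at hlt
  obtain ⟨v, g, hv, hg, hL, hlim⟩ := hlt
  have hs := fun j : ℕ => step_lemma hD hP hΩ hv hg hL hlim (hAΩ j) (hAc j) (M := 2^j) (by positivity)
    hη0 hηt (h8.trans_le (hAt j)) j
  choose i hi gF h hF hgF hint hm h01 hh using hs
  have hconv := conv_lemma hΩ hu hL hi hm h01 hh
  have key : tvOpen μ Ω u ≤ liminf (fun j => ∫⁻ x in Ω, gF j x ∂μ) atTop :=
    (iInf₂_le _ gF).trans ((iInf₂_le hF hgF).trans (iInf_le _ hconv))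
  have hb : Tendsto (fun j : ℕ => ENNReal.ofReal (12 * (1/2)^j)) atTop (𝓝 0) := by
    have : Tendsto (fun j : ℕ => (12 * (1/2)^j : ℝ)) atTop (𝓝 (12 * 0)) :=
      (tendsto_pow_atTop_nhds_zero_of_lt_one (by norm_num) (by norm_num)).const_mul 12
    simpa using ENNReal.tendsto_ofReal this
  have hev : ∀ᶠ j : ℕ in atTop, ENNReal.ofReal (12 * (1/2)^j) ≤ η :=
    (hb.eventually (gt_mem_nhds (pos_iff_ne_zero.2 hη0))).mono fun _ h => h.le
  have h6t : 6 * η ≠ ∞ := ENNReal.mul_ne_top (by norm_num) hηt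
  have hup : liminf (fun j => ∫⁻ x in Ω, gF j x ∂μ) atTop ≤ tvOpen μ Ω u + η + η - 6 * η := by
    apply liminf_le_of_frequently_le'
    apply Eventually.frequently
    filter_upwards [hev] with j hj
    apply ENNReal.le_sub_of_add_le_right h6t
    refine (hint j).trans ?_
    gcongr
    refine le_trans (le_of_eq ?_) hj
    rw [← ENNReal.ofReal_ofNat 12, ← ENNReal.ofReal_mul (by norm_num), ← ENNReal.ofReal_mul (by positivity)]
    congr 1
    rw [mul_left_comm, ← mul_pow]; norm_num
  have hle := key.trans hup
  have e : tvOpen μ Ω u + η + η - 6 * η = tvOpen μ Ω u - 4 * η := by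
    have e1 : 6 * η = 2 * η + 4 * η := by ring
    have e2 : tvOpen μ Ω u + η + η = tvOpen μ Ω u + 2 * η := by ring
    rw [e1, e2, ← tsub_tsub, ENNReal.add_sub_cancel_right (ENNReal.mul_ne_top (by norm_num) hηt)]
  rw [e] at hle
  have h4 : 4 * η ≠ 0 := mul_ne_zero (by norm_num) hη0
  have hτ : tvOpen μ Ω u ≠ 0 := by
    intro h0
    have h1 : 8 * η ≤ tvOpen μ Ω u :=
      (h8.trans_le (hAt 0)).trans ((iInf₂_le _ hΩ).trans (iInf_le _ (hAΩ 0)))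
    rw [h0, nonpos_iff_eq_zero] at h1
    exact mul_ne_zero (by norm_num) hη0 h1
  exact absurd hle (not_le.2 (ENNReal.sub_lt_self hfin.ne hτ h4))

end PaperBV
end
end

section
/- Let U ⊂ X be a 1-quasiopen set and let A ⊂ X satisfy H(A) = 0, where H is the codimension-one Hausdorff measure. Then both U∖A and U∪A are 1-quasiopen sets. -/
open MeasureTheory Filter Metric Set
open scoped Topology ENNReal NNReal symmDiff

noncomputable section

namespace PaperBV

variable {X : Type*} [MetricSpace X] [MeasurableSpace X] [BorelSpace X]

set_option linter.unusedSectionVars false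

lemma curve_cont (γ : Curve X) : ContinuousOn γ.toFun (Set.Icc 0 γ.len) :=
  γ.lip.continuousOn

lemma curve_integral_add (γ : Curve X) (f g : X → ℝ≥0∞) (hf : Measurable f) :
    γ.integral (fun x => f x + g x) = γ.integral f + γ.integral g := by
  unfold Curve.integral
  have h : AEMeasurable (fun t => f (γ.toFun t)) (volume.restrict (Set.Icc (0:ℝ) γ.len)) :=
    hf.comp_aemeasurable ((curve_cont γ).aemeasurable measurableSet_Icc)
  exact lintegral_add_left' h _

lemma lip_ug_s12 (u : X → ℝ) (K : ℝ≥0) (hu : LipschitzWith K u) (S : Set X) (hS : MeasurableSet S)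
    (h0 : ∀ x ∉ S, u x = 0) (γ : Curve X) :
    UGIneq u (S.indicator (fun _ => (K : ℝ≥0∞))) γ := by
  unfold UGIneq Curve.integral
  set I := Set.Icc (0:ℝ) γ.len with hI
  set f : ℝ → ℝ := fun t => u (γ.toFun t) with hf
  have hlip : LipschitzOnWith K f I := by
    have := hu.comp_lipschitzOnWith γ.lip
    rw [mul_one] at this
    exact this
  have hmeas : NullMeasurableSet (γ.toFun ⁻¹' S) (volume.restrict I) :=
    ((curve_cont γ).aemeasurable measurableSet_Icc).nullMeasurableSet_preimage hS
  have e1 : ∫⁻ t in I, S.indicator (fun _ => (K : ℝ≥0∞)) (γ.toFun t)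
      = K * volume (γ.toFun ⁻¹' S ∩ I) := by
    have : (fun t => S.indicator (fun _ => (K : ℝ≥0∞)) (γ.toFun t))
        = (γ.toFun ⁻¹' S).indicator (fun _ => (K : ℝ≥0∞)) := by
      ext t; rfl
    rw [this, lintegral_indicator_const₀ hmeas, Measure.restrict_apply₀ hmeas]
  rw [e1]
  have hivt : Set.uIcc (f 0) (f γ.len) ⊆ f '' I := by
    have := intermediate_value_uIcc (a := (0:ℝ)) (b := γ.len) (f := f)
      (by rw [Set.uIcc_of_le γ.len_nonneg]; exact hlip.continuousOn)
    rwa [Set.uIcc_of_le γ.len_nonneg] at this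
  have hsub : Set.uIcc (f 0) (f γ.len) \ {0} ⊆ f '' (γ.toFun ⁻¹' S ∩ I) := by
    rintro y ⟨hy, hy0⟩
    obtain ⟨t, ht, rfl⟩ := hivt hy
    refine ⟨t, ⟨?_, ht⟩, rfl⟩
    by_contra hn
    exact hy0 (h0 _ hn)
  have hv : volume (Set.uIcc (f 0) (f γ.len) \ {0}) = ENNReal.ofReal |f 0 - f γ.len| := by
    rw [measure_sdiff_null (by simp), Set.uIcc, Real.volume_Icc, max_sub_min_eq_abs, abs_sub_comm]
  have hH : volume (f '' (γ.toFun ⁻¹' S ∩ I)) ≤ K * volume (γ.toFun ⁻¹' S ∩ I) := by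
    have := (hlip.mono (Set.inter_subset_right (s := γ.toFun ⁻¹' S))).hausdorffMeasure_image_le
      (d := 1) zero_le_one
    simpa [hausdorffMeasure_real] using this
  change ENNReal.ofReal |f 0 - f γ.len| ≤ _
  rw [← hv]
  exact (measure_mono hsub).trans hH

lemma exists_wug {μ : Measure X} {A : Set X} {δ : ℝ≥0∞} (h : capa1 μ A < δ) :
    ∃ (u : X → ℝ) (g : X → ℝ≥0∞), (∀ x ∈ A, 1 ≤ u x) ∧ IsWeakUpperGradientOn μ u g Set.univ ∧
      (∫⁻ x, ENNReal.ofReal |u x| ∂μ) + ∫⁻ x, g x ∂μ < δ := by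
  unfold capa1 at h
  simp only [iInf_lt_iff] at h
  obtain ⟨u, hu, hA, hn⟩ := h
  unfold NNorm at hn
  rw [ENNReal.add_iInf] at hn
  simp only [iInf_lt_iff] at hn
  obtain ⟨g, hg⟩ := hn
  by_cases hw : IsWeakUpperGradientOn μ u g Set.univ
  · refine ⟨u, g, hA, hw, ?_⟩
    simpa [hw] using hg
  · simp [hw] at hg

lemma capa1_le {μ : Measure X} {A : Set X} (u : X → ℝ) (g : X → ℝ≥0∞) (hA : ∀ x ∈ A, 1 ≤ u x)
    (hg : IsWeakUpperGradientOn μ u g Set.univ) :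
    capa1 μ A ≤ (∫⁻ x, ENNReal.ofReal |u x| ∂μ) + ∫⁻ x, g x ∂μ := by
  have h1 : NNorm μ Set.univ u ≤ (∫⁻ x, ENNReal.ofReal |u x| ∂μ) + ∫⁻ x, g x ∂μ := by
    unfold NNorm
    simp only [Measure.restrict_univ]
    gcongr
    exact iInf₂_le g hg
  by_cases ht : (∫⁻ x, ENNReal.ofReal |u x| ∂μ) + ∫⁻ x, g x ∂μ = ∞
  · rw [ht]; exact le_top
  · refine le_trans ?_ h1
    exact iInf₂_le_of_le u (lt_of_le_of_lt h1 (lt_top_iff_ne_top.2 ht)) (iInf_le _ hA)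

lemma capa1_union_lt {μ : Measure X} {A B : Set X} {a b : ℝ≥0∞} (hA : capa1 μ A < a)
    (v : X → ℝ) (w k : X → ℝ≥0∞) (hv : ∀ x ∈ B, 1 ≤ v x) (hw : Measurable w) (hk : Measurable k)
    (hvw : ∀ x, ENNReal.ofReal |v x| ≤ w x) (hvk : ∀ γ, UGIneq v k γ)
    (hb : (∫⁻ x, w x ∂μ) + ∫⁻ x, k x ∂μ < b) : capa1 μ (A ∪ B) < a + b := by
  obtain ⟨u, g, hu, ⟨hgm, ρ, hρm, hρ, hΓ⟩, hl⟩ := exists_wug hA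
  have hwug : IsWeakUpperGradientOn μ (fun x => max (u x) (v x)) (fun x => g x + k x) Set.univ := by
    refine ⟨hgm.add hk.aemeasurable, ρ, hρm, hρ, ?_⟩
    rintro γ ⟨-, hγ⟩
    by_cases h1 : UGIneq u g γ
    · exfalso
      apply hγ
      have h2 := hvk γ
      unfold UGIneq at *
      have h3 : γ.integral g + γ.integral k ≤ γ.integral (fun x => g x + k x) :=
        le_lintegral_add _ _
      refine le_trans ?_ h3
      refine le_trans ?_ (add_le_add h1 h2)
      rw [← ENNReal.ofReal_add (abs_nonneg _) (abs_nonneg _)]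
      apply ENNReal.ofReal_le_ofReal
      refine (abs_max_sub_max_le_max _ _ _ _).trans ?_
      exact max_le_add_of_nonneg (abs_nonneg _) (abs_nonneg _)
    · exact hΓ γ ⟨fun _ _ => trivial, h1⟩
  refine (capa1_le _ _ ?_ hwug).trans_lt ?_
  · rintro x (hx | hx)
    · exact le_max_of_le_left (hu x hx)
    · exact le_max_of_le_right (hv x hx)
  · rw [lintegral_add_right _ hk]
    refine lt_of_le_of_lt ?_ (ENNReal.add_lt_add hl hb)
    have h5 : ∫⁻ x, ENNReal.ofReal |max (u x) (v x)| ∂μ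
        ≤ (∫⁻ x, ENNReal.ofReal |u x| ∂μ) + ∫⁻ x, w x ∂μ := by
      rw [← lintegral_add_right _ hw]
      refine lintegral_mono fun x => ?_
      refine le_trans ?_ (add_le_add le_rfl (hvw x))
      rw [← ENNReal.ofReal_add (abs_nonneg _) (abs_nonneg _)]
      apply ENNReal.ofReal_le_ofReal
      exact abs_max_le_max_abs_abs.trans
        (max_le_add_of_nonneg (abs_nonneg _) (abs_nonneg _))
    refine (add_le_add h5 le_rfl).trans (le_of_eq ?_)
    ring

/-- The cutoff function of a ball. -/
def cut (c : X) (r : ℝ) (x : X) : ℝ := max 0 (min 1 (2 - dist x c / r))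

lemma cut_nonneg (c : X) (r : ℝ) (x : X) : 0 ≤ cut c r x := le_max_left _ _

lemma cut_le_one (c : X) (r : ℝ) (x : X) : cut c r x ≤ 1 :=
  max_le zero_le_one (min_le_left _ _)

lemma cut_eq_one (c : X) {r : ℝ} (hr : 0 < r) {x : X} (hx : x ∈ ball c r) : 1 ≤ cut c r x := by
  refine le_max_of_le_right (le_min le_rfl ?_)
  have : dist x c / r ≤ 1 := (div_le_one hr).2 (mem_ball.1 hx).le
  linarith

lemma cut_eq_zero (c : X) {r : ℝ} (hr : 0 < r) {x : X} (hx : x ∉ ball c (2 * r)) :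
    cut c r x = 0 := by
  refine max_eq_left (min_le_of_right_le ?_)
  have : 2 ≤ dist x c / r := by
    rw [le_div_iff₀ hr]
    simpa using hx
  linarith

lemma cut_lip (c : X) {r : ℝ} (hr : 0 < r) : LipschitzWith (Real.toNNReal r⁻¹) (cut c r) := by
  refine LipschitzWith.of_dist_le_mul fun x y => ?_
  rw [Real.coe_toNNReal _ (inv_pos.2 hr).le, Real.dist_eq]
  unfold cut
  refine (abs_max_sub_max_le_max _ _ _ _).trans ?_
  have h0 : 0 ≤ r⁻¹ * dist x y := mul_nonneg (inv_pos.2 hr).le dist_nonneg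
  refine max_le (by simpa using h0) ?_
  refine (abs_min_sub_min_le_max _ _ _ _).trans ?_
  refine max_le (by simpa using h0) ?_
  have : 2 - dist x c / r - (2 - dist y c / r) = r⁻¹ * (dist y c - dist x c) := by
    field_simp
    ring
  rw [this, abs_mul, abs_of_pos (inv_pos.2 hr)]
  refine mul_le_mul_of_nonneg_left ?_ (inv_pos.2 hr).le
  rw [dist_comm x y]
  exact abs_dist_sub_le _ _ _

lemma key {μ : Measure X} {Cd : ℝ} (hd : Doubling μ Cd) {A : Set X} (hA : Hcodim μ A = 0)
    {ε : ℝ} (hε : 0 < ε) :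
    ∃ B : Set X, IsOpen B ∧ A ⊆ B ∧ ∃ (v : X → ℝ) (w k : X → ℝ≥0∞), (∀ x ∈ B, 1 ≤ v x) ∧
      Measurable w ∧ Measurable k ∧
      (∀ x, ENNReal.ofReal |v x| ≤ w x) ∧ (∀ γ, UGIneq v k γ) ∧
      (∫⁻ x, w x ∂μ) + ∫⁻ x, k x ∂μ < ENNReal.ofReal ε := by
  obtain ⟨hC, hd⟩ := hd
  have hC0 : 0 < Cd := by linarith
  have h0 : HR μ 1 A < ENNReal.ofReal (ε / (2 * Cd)) := by
    have : HR μ 1 A ≤ Hcodim μ A := le_iSup₂_of_le (1:ℝ) zero_lt_one le_rfl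
    rw [hA] at this
    exact this.trans_lt (ENNReal.ofReal_pos.2 (by positivity))
  unfold HR at h0
  simp only [iInf_lt_iff] at h0
  obtain ⟨c, r, hr, hcov, hsum⟩ := h0
  have hbdd : ∀ x, BddAbove (Set.range fun i => cut (c i) (r i) x) := fun x =>
    ⟨1, by rintro _ ⟨i, rfl⟩; exact cut_le_one _ _ _⟩
  refine ⟨⋃ i, ball (c i) (r i), isOpen_iUnion fun i => isOpen_ball, hcov,
    fun x => ⨆ i, cut (c i) (r i) x,
    fun x => ∑' i, (ball (c i) (2 * r i)).indicator (fun _ => (1:ℝ≥0∞)) x,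
    fun x => ∑' i, (ball (c i) (2 * r i)).indicator
      (fun _ => ((Real.toNNReal (r i)⁻¹ : ℝ≥0) : ℝ≥0∞)) x, ?_, ?_, ?_, ?_, ?_, ?_⟩
  · intro x hx
    obtain ⟨i, hi⟩ := Set.mem_iUnion.1 hx
    exact (cut_eq_one (c i) (hr i).1 hi).trans (le_ciSup (hbdd x) i)
  · exact Measurable.ennreal_tsum fun i => measurable_const.indicator measurableSet_ball
  · exact Measurable.ennreal_tsum fun i => measurable_const.indicator measurableSet_ball
  · intro x
    have hnn : 0 ≤ ⨆ i, cut (c i) (r i) x := Real.iSup_nonneg fun i => cut_nonneg _ _ _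
    rw [abs_of_nonneg hnn]
    by_cases hx : ∃ i, x ∈ ball (c i) (2 * r i)
    · obtain ⟨i, hi⟩ := hx
      refine le_trans ?_ (ENNReal.le_tsum i)
      rw [Set.indicator_of_mem hi]
      exact ENNReal.ofReal_le_one.2 (ciSup_le fun i => cut_le_one _ _ _)
    · push Not at hx
      have : (⨆ i, cut (c i) (r i) x) ≤ 0 :=
        ciSup_le fun i => (cut_eq_zero (c i) (hr i).1 (hx i)).le
      rw [ENNReal.ofReal_of_nonpos this]
      exact zero_le
  · intro γ
    unfold UGIneq
    set C := γ.integral (fun x => ∑' i, (ball (c i) (2 * r i)).indicator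
      (fun _ => ((Real.toNNReal (r i)⁻¹ : ℝ≥0) : ℝ≥0∞)) x) with hCdef
    have hi : ∀ i, ENNReal.ofReal |cut (c i) (r i) (γ.toFun 0) - cut (c i) (r i) (γ.toFun γ.len)|
        ≤ C := by
      intro i
      refine (lip_ug_s12 (cut (c i) (r i)) _ (cut_lip (c i) (hr i).1) (ball (c i) (2 * r i))
        measurableSet_ball (fun x hx => cut_eq_zero (c i) (hr i).1 hx) γ).trans ?_
      exact lintegral_mono fun t => ENNReal.le_tsum (f := fun i => (ball (c i) (2 * r i)).indicator
        (fun _ => ((Real.toNNReal (r i)⁻¹ : ℝ≥0) : ℝ≥0∞)) (γ.toFun t)) i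
    by_cases hCt : C = ∞
    · rw [hCt]; exact le_top
    · have hi' := fun i => (ENNReal.ofReal_le_iff_le_toReal hCt).1 (hi i)
      rw [ENNReal.ofReal_le_iff_le_toReal hCt, abs_sub_le_iff]
      constructor
      · rw [sub_le_iff_le_add]
        refine ciSup_le fun i => ?_
        have := (abs_sub_le_iff.1 (hi' i)).1
        have := le_ciSup (hbdd (γ.toFun γ.len)) i
        linarith
      · rw [sub_le_iff_le_add]
        refine ciSup_le fun i => ?_
        have := (abs_sub_le_iff.1 (hi' i)).2
        have := le_ciSup (hbdd (γ.toFun 0)) i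
        linarith
  · rw [lintegral_tsum fun i => (measurable_const.indicator measurableSet_ball).aemeasurable,
      lintegral_tsum fun i => (measurable_const.indicator measurableSet_ball).aemeasurable,
      ← ENNReal.tsum_add]
    have hle : ∀ i, (∫⁻ x, (ball (c i) (2 * r i)).indicator (fun _ => (1:ℝ≥0∞)) x ∂μ)
        + ∫⁻ x, (ball (c i) (2 * r i)).indicator
          (fun _ => ((Real.toNNReal (r i)⁻¹ : ℝ≥0) : ℝ≥0∞)) x ∂μ
        ≤ ENNReal.ofReal (2 * Cd) * (μ (ball (c i) (r i)) / ENNReal.ofReal (r i)) := by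
      intro i
      have hri := hr i
      rw [lintegral_indicator_const measurableSet_ball, lintegral_indicator_const measurableSet_ball,
        ← add_mul]
      have e : ((Real.toNNReal (r i)⁻¹ : ℝ≥0) : ℝ≥0∞) = (ENNReal.ofReal (r i))⁻¹ :=
        ENNReal.ofReal_inv_of_pos hri.1
      have h1 : (1:ℝ≥0∞) ≤ (ENNReal.ofReal (r i))⁻¹ :=
        ENNReal.one_le_inv.2 (ENNReal.ofReal_le_one.2 hri.2)
      rw [e]
      calc _ ≤ ((ENNReal.ofReal (r i))⁻¹ + (ENNReal.ofReal (r i))⁻¹)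
            * (ENNReal.ofReal Cd * μ (ball (c i) (r i))) := by
            gcongr
            exact (hd (c i) (r i) hri.1).2.1
        _ = _ := by
            rw [ENNReal.ofReal_mul zero_le_two, div_eq_mul_inv, ENNReal.ofReal_ofNat]
            ring
    refine (ENNReal.tsum_le_tsum hle).trans_lt ?_
    rw [ENNReal.tsum_mul_left]
    have hpos : 0 < 2 * Cd := by positivity
    calc _ < ENNReal.ofReal (2 * Cd) * ENNReal.ofReal (ε / (2 * Cd)) :=
          ENNReal.mul_lt_mul_right (ENNReal.ofReal_pos.2 hpos).ne' ENNReal.ofReal_ne_top hsum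
      _ = ENNReal.ofReal ε := by
          rw [← ENNReal.ofReal_mul hpos.le]
          congr 1
          field_simp

/-- Stability of `1`-quasiopen sets under `H`-negligible
perturbations: if `U` is `1`-quasiopen and `H(A) = 0` (codimension-one Hausdorff
measure), then `U \ A` and `U ∪ A` are `1`-quasiopen. -/
theorem quasiopen_diff_union_of_H_null
    (μ : Measure X) (hcomp : CompleteSpace X)
    (hdoub : ∃ Cd : ℝ, Doubling μ Cd) (hpoin : ∃ CP lam : ℝ, Poincare μ CP lam)
    (U A : Set X) (hU : QuasiOpen μ U) (hA : Hcodim μ A = 0) :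
    QuasiOpen μ (U \ A) ∧ QuasiOpen μ (U ∪ A) := by
  obtain ⟨Cd, hd⟩ := hdoub
  have main : ∀ ε : ℝ, 0 < ε → ∃ G : Set X, IsOpen G ∧ capa1 μ G < ENNReal.ofReal ε ∧
      IsOpen (U ∪ G) ∧ A ⊆ G := by
    intro ε hε
    obtain ⟨G, hG, hc, hUG⟩ := hU (ε / 2) (half_pos hε)
    obtain ⟨B, hB, hAB, v, w, k, h1, h2, h3, h4, h5, h6⟩ := key hd hA (half_pos hε)
    refine ⟨G ∪ B, hG.union hB, ?_, ?_, hAB.trans Set.subset_union_right⟩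
    · have := capa1_union_lt hc v w k h1 h2 h3 h4 h5 h6
      rwa [← ENNReal.ofReal_add (half_pos hε).le (half_pos hε).le, add_halves] at this
    · rw [← Set.union_assoc]
      exact hUG.union hB
  constructor
  · intro ε hε
    obtain ⟨G, hG, hc, hUG, hAG⟩ := main ε hε
    refine ⟨G, hG, hc, ?_⟩
    convert hUG using 1
    ext x
    have := @hAG x
    simp only [Set.mem_union, Set.mem_sdiff]
    tauto
  · intro ε hε
    obtain ⟨G, hG, hc, hUG, hAG⟩ := main ε hε
    refine ⟨G, hG, hc, ?_⟩
    convert hUG using 1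
    ext x
    have := @hAG x
    simp only [Set.mem_union]
    tauto

end PaperBV
end
end
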